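/- arXiv:1402.1675 — 2 statements merged into one kernel-verified Lean document; each statement's English description precedes it below -/
import Mathlib

section
/- Let K be any field, and let G_12 ⊆ S_8 be the subgroup generated by the permutations Φ = (1,2,4)(5,6,8) and Ψ̃ = (1,3,5,7)(2,4,6,8); G_12 has order 24 and is isomorphic to SL(2,3). Then the fixed field K(x_1,…,x_8)^{G_12} is K-rational. -/
noncomputable section

/-- The rational function field `K(x_i : i ∈ I)` over `K`, realized as the fraction field
of the multivariate polynomial ring. -/
abbrev RFF (K : Type) [Field K] (I : Type) := FractionRing (MvPolynomial I K)

/-- The image of the variable `x_i` in the rational function field `K(x_i : i ∈ I)`. -/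
noncomputable def Xvar (K : Type) [Field K] (I : Type) (i : I) : RFF K I :=
  algebraMap (MvPolynomial I K) (RFF K I) (MvPolynomial.X i)

/-- Permutations of the variables as `K`-algebra automorphisms of the polynomial ring. -/
def renameHom (K : Type) [Field K] (I : Type) :
    Equiv.Perm I →* (MvPolynomial I K ≃ₐ[K] MvPolynomial I K) where
  toFun σ := MvPolynomial.renameEquiv K σ
  map_one' := MvPolynomial.renameEquiv_refl K
  map_mul' σ τ := (MvPolynomial.renameEquiv_trans K τ σ).symm

/-- The action of permutations of the variables on `K(x_i : i ∈ I)` by `K`-automorphisms,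
determined by `σ(x_i) = x_{σ(i)}`. -/
noncomputable def permHom (K : Type) [Field K] (I : Type) :
    Equiv.Perm I →* (RFF K I ≃ₐ[K] RFF K I) :=
  (IsFractionRing.fieldEquivOfAlgEquivHom K (RFF K I)).comp (renameHom K I)

/-- The fixed field `K(x_i : i ∈ I)^G` of a group `G` of permutations of the variables. -/
noncomputable def fixedSub (K : Type) [Field K] (I : Type) (G : Subgroup (Equiv.Perm I)) :
    IntermediateField K (RFF K I) :=
  IntermediateField.fixedField (G.map (permHom K I))

/-- An extension `L/K` is `K`-rational if it is purely transcendental over `K`, i.e. generated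
by finitely many algebraically independent elements. -/
def IsRatExt (K : Type) [Field K] (L : Type*) [Field L] [Algebra K L] : Prop :=
  ∃ (n : ℕ) (t : Fin n → L), AlgebraicIndependent K t ∧
    IntermediateField.adjoin K (Set.range t) = ⊤


/-!
The sums `xᵢ + xᵢ₊₄` are permuted by `G₁₂`, and so are the values of a polynomial `P` at suitable
functions `uᵢ` which generate `K(x)` together with the sums: the differences `xᵢ - xᵢ₊₄` with
`P = X²` if `2 ≠ 0`, the ratios `xᵢ / (xᵢ + xᵢ₊₄)` with `P = X² + X` if `2 = 0`. Four invariants in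
the `uᵢ` and the four moments `∑ P(uᵢ)ᵏ (xᵢ + xᵢ₊₄)` generate a subfield of the fixed field: once
the `uᵢ` are adjoined, the moments give back the sums by Lagrange interpolation, so that `K(x)` has
degree at most `24 ≤ |G₁₂|` over this subfield, which is thus the whole fixed field. Its eight
generators are algebraically independent since the transcendence degree is eight.

If `2 ≠ 0`, the quaternion subgroup multiplies the quaternion `u₂ + u₀ i + u₁ j + u₃ k` by units on
the right, which up to signs of its columns leaves the matrix of the conjugation by it unchanged;
hence ratios of matrix entries are invariant, and the element of order three permutes three such
ratios cyclically. Masuda's generators of the field of cyclic invariants finish the construction.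
If `2 = 0`, Artin–Schreier theory produces three analogous functions.
-/
section FieldTheory

open IntermediateField
open scoped IntermediateField.algebraAdjoinAdjoin

variable {K F ι : Type*} [Field K] [Field F] [Algebra K F]

theorem algebraicIndependent_of_card_le_trdeg [Finite ι]
    (htr : (Nat.card ι : Cardinal) ≤ Algebra.trdeg K F) (t : ι → F)
    [Algebra.IsAlgebraic (adjoin K (Set.range t)) F] : AlgebraicIndependent K t := by
  have : Algebra.IsAlgebraic (Algebra.adjoin K (Set.range t)) (adjoin K (Set.range t)) :=
    (IsFractionRing.comap_isAlgebraic_iff (K := adjoin K (Set.range t))).2 inferInstance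
  have : Algebra.IsAlgebraic (Algebra.adjoin K (Set.range t)) F :=
    .trans _ (adjoin K (Set.range t)) F
  refine (Algebra.IsAlgebraic.isTranscendenceBasis_of_lift_le_trdeg_of_finite K t ?_).1
  simpa [← Nat.cast_card] using htr

theorem algebraicIndependent_of_adjoin_eq_top [Finite ι]
    (htr : (Nat.card ι : Cardinal) ≤ Algebra.trdeg K F) {t : ι → F}
    (htop : adjoin K (Set.range t) = ⊤) : AlgebraicIndependent K t := by
  have : Algebra.IsAlgebraic (adjoin K (Set.range t)) F :=
    ⟨fun z ↦ isAlgebraic_algebraMap (⟨z, htop ▸ mem_top⟩ : adjoin K (Set.range t))⟩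
  exact algebraicIndependent_of_card_le_trdeg htr t

theorem rank_le_mul_rank_adjoin_simple {d : ℕ} {α : F} {c : Fin d → K}
    (hα : α ^ d = ∑ i, algebraMap K F (c i) * α ^ (i : ℕ)) :
    Module.rank K F ≤ d * Module.rank K⟮α⟯ F := by
  set p : Polynomial K := .X ^ d - ∑ i : Fin d, .C (c i) * .X ^ (i : ℕ) with hp
  have hdeg := Polynomial.degree_sum_fin_lt c
  have hmonic : p.Monic := Polynomial.monic_X_pow_sub hdeg
  have hroot : Polynomial.aeval α p = 0 := by simp [hp, hα]
  have hpdeg : p.degree = d := by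
    rw [hp, Polynomial.degree_sub_eq_left_of_degree_lt (by simpa using hdeg),
      Polynomial.degree_X_pow]
  have hint : IsIntegral K α := ⟨p, hmonic, hroot⟩
  have hle : Module.finrank K K⟮α⟯ ≤ d := by
    rw [adjoin.finrank hint]
    exact Polynomial.natDegree_le_of_degree_le (hpdeg ▸ minpoly.min K α hmonic hroot)
  have := adjoin.finiteDimensional hint
  rw [← rank_mul_rank K K⟮α⟯ F, ← Module.finrank_eq_rank K K⟮α⟯]
  gcongr

theorem rank_le_mul_of_pow_eq_sum {M : IntermediateField K F} {d : ℕ} {α : F} {c : Fin d → F}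
    {n : Cardinal} (hα : α ^ d = ∑ i, c i * α ^ (i : ℕ)) (hc : ∀ i, c i ∈ M)
    (hn : ∀ N, M ≤ N → α ∈ N → Module.rank N F ≤ n) : Module.rank M F ≤ d * n := by
  refine (rank_le_mul_rank_adjoin_simple (K := M) (c := fun i ↦ ⟨c i, hc i⟩) hα).trans ?_
  gcongr
  exact hn (restrictScalars K M⟮α⟯) (fun x hx ↦ M⟮α⟯.algebraMap_mem ⟨x, hx⟩)
    (mem_adjoin_simple_self M α)

theorem rank_le_two_mul_of_sq_eq {M : IntermediateField K F} {α b c : F} {n : Cardinal}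
    (hα : α ^ 2 = b * α + c) (hb : b ∈ M) (hc : c ∈ M)
    (hn : ∀ N, M ≤ N → α ∈ N → Module.rank N F ≤ n) : Module.rank M F ≤ 2 * n :=
  rank_le_mul_of_pow_eq_sum (c := ![c, b]) (by simp [hα, add_comm]) (by simp [hb, hc]) hn

theorem mem_of_moments_mem [Fintype ι] (M : IntermediateField K F) {f s : ι → F}
    (hinj : Function.Injective f) (hf : ∀ i, f i ∈ M)
    (hs : ∀ k < Fintype.card ι, ∑ i, f i ^ k * s i ∈ M) (j : ι) : s j ∈ M := by
  classical
  set v : ι → M := fun i ↦ ⟨f i, hf i⟩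
  have hv : Set.InjOn v (Finset.univ : Finset ι) := fun i _ l _ h ↦ hinj (congrArg Subtype.val h)
  set p := Lagrange.basis Finset.univ v j
  have hdeg : p.natDegree < Fintype.card ι := by
    rw [Lagrange.natDegree_basis hv (Finset.mem_univ j), Finset.card_univ]
    exact Nat.sub_lt (Fintype.card_pos_iff.2 ⟨j⟩) one_pos
  have hp (i : ι) : Polynomial.aeval (f i) p = if i = j then 1 else 0 := by
    have : Polynomial.aeval (f i) p = algebraMap M F (p.eval (v i)) :=
      Polynomial.aeval_algebraMap_apply_eq_algebraMap_eval (v i) p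
    rw [this]
    split_ifs with h
    · rw [h, Lagrange.eval_basis_self hv (Finset.mem_univ j), map_one]
    · rw [Lagrange.eval_basis_of_ne (Ne.symm h) (Finset.mem_univ i), map_zero]
  have hsum : s j = ∑ k ∈ Finset.range (Fintype.card ι), p.coeff k * ∑ i, f i ^ k * s i := by
    calc s j = ∑ i, Polynomial.aeval (f i) p * s i := by simp [hp]
      _ = _ := by
        simp_rw [Polynomial.aeval_eq_sum_range' hdeg, Finset.sum_mul, Finset.mul_sum]
        rw [Finset.sum_comm]
        simp only [Algebra.smul_def, mul_assoc, IntermediateField.algebraMap_apply]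
  rw [hsum]
  exact sum_mem fun k hk ↦ mul_mem (p.coeff k).2 (hs k (Finset.mem_range.1 hk))

end FieldTheory

section Rationality

open IntermediateField

variable {K : Type} {F ι : Type*} [Field K] [Field F] [Algebra K F]

theorem isRatExt_adjoin [Finite ι] {t : ι → F} (ht : AlgebraicIndependent K t) :
    IsRatExt K (adjoin K (Set.range t)) := by
  set e := Finite.equivFin ι
  set u : Fin (Nat.card ι) → adjoin K (Set.range t) :=
    fun i ↦ ⟨t (e.symm i), subset_adjoin K _ ⟨_, rfl⟩⟩
  have hu : (adjoin K (Set.range t)).val '' Set.range u = Set.range t := by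
    rw [← Set.range_comp]
    exact e.symm.surjective.range_comp t
  refine ⟨Nat.card ι, u, ?_, ?_⟩
  · exact .of_comp (adjoin K (Set.range t)).val (ht.comp e.symm e.symm.injective)
  · apply lift_injective
    rw [lift_adjoin, lift_top]
    exact congrArg (adjoin K) hu

theorem isRatExt_fixedField [Finite ι] (htr : (Nat.card ι : Cardinal) ≤ Algebra.trdeg K F)
    (H : Subgroup (F ≃ₐ[K] F)) [Finite H] {t : ι → F} (ht : ∀ i, t i ∈ fixedField H)
    (hrank : Module.rank (adjoin K (Set.range t)) F ≤ Nat.card H) : IsRatExt K (fixedField H) := by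
  have hfin : FiniteDimensional (adjoin K (Set.range t)) F :=
    Module.rank_lt_aleph0_iff.1 (hrank.trans_lt Cardinal.natCast_lt_aleph0)
  have hle : adjoin K (Set.range t) ≤ fixedField H :=
    adjoin_le_iff.2 (Set.range_subset_iff.2 ht)
  have hdeg : Module.finrank (adjoin K (Set.range t)) F ≤ Module.finrank (fixedField H) F := by
    have := Fintype.ofFinite H
    have hH : Module.finrank (fixedField H) F = Nat.card H := by
      rw [Nat.card_eq_fintype_card]
      exact FixedPoints.finrank_eq_card H F
    rw [hH]
    exact Module.finrank_le_of_rank_le hrank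
  rw [← eq_of_le_of_finrank_le' hle hdeg]
  exact isRatExt_adjoin (algebraicIndependent_of_card_le_trdeg htr t)

end Rationality

section Specialization

variable {K F E ι : Type*} [Field K] [Field F] [Algebra K F] [Field E] [Algebra K E]

open MvPolynomial

/-- The graph of the specialization `y ↦ f`: the pairs `(z, e)` for which some fraction `p / q`
with `q(f) ≠ 0` satisfies `z = p(y) / q(y)` and `e = p(f) / q(f)`. The equations are multiplied out,
so that this is a subalgebra also when `y` is algebraically dependent. -/
def specializationGraph (K : Type*) [Field K] [Algebra K F] [Algebra K E] (y : ι → F) (f : ι → E) :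
    Subalgebra K (F × E) where
  carrier := {z | ∃ p q : MvPolynomial ι K, aeval f q ≠ 0 ∧
    aeval y q * z.1 = aeval y p ∧ aeval f q * z.2 = aeval f p}
  mul_mem' := by
    rintro ⟨z₁, e₁⟩ ⟨z₂, e₂⟩ ⟨p₁, q₁, hq₁, hz₁, he₁⟩ ⟨p₂, q₂, hq₂, hz₂, he₂⟩
    refine ⟨p₁ * p₂, q₁ * q₂, by simp [hq₁, hq₂], ?_, ?_⟩ <;>
      simp only [map_mul, ← hz₁, ← he₁, ← hz₂, ← he₂, Prod.mk_mul_mk] <;> ring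
  add_mem' := by
    rintro ⟨z₁, e₁⟩ ⟨z₂, e₂⟩ ⟨p₁, q₁, hq₁, hz₁, he₁⟩ ⟨p₂, q₂, hq₂, hz₂, he₂⟩
    refine ⟨p₁ * q₂ + p₂ * q₁, q₁ * q₂, by simp [hq₁, hq₂], ?_, ?_⟩ <;>
      simp only [map_mul, map_add, ← hz₁, ← he₁, ← hz₂, ← he₂, Prod.mk_add_mk] <;> ring
  algebraMap_mem' r := ⟨C r, 1, by simp, by simp, by simp⟩

variable {y : ι → F} {f : ι → E} {z z₁ z₂ : F} {e e₁ e₂ : E}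

theorem prodMk_mem_specializationGraph (y : ι → F) (f : ι → E) (i : ι) :
    (y i, f i) ∈ specializationGraph K y f :=
  ⟨X i, 1, by simp, by simp, by simp⟩

theorem ne_zero_of_mem_specializationGraph (hy : AlgebraicIndependent K y)
    (h : (z, e) ∈ specializationGraph K y f) (he : e ≠ 0) : z ≠ 0 := by
  obtain ⟨p, q, hq, hz, he'⟩ := h
  rintro rfl
  have hp : p = 0 := hy.eq_zero_of_aeval_eq_zero p (by simpa using hz.symm)
  exact mul_ne_zero hq he (by simpa [hp] using he')

theorem div_mem_specializationGraph (hy : AlgebraicIndependent K y)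
    (h₁ : (z₁, e₁) ∈ specializationGraph K y f) (h₂ : (z₂, e₂) ∈ specializationGraph K y f)
    (he₂ : e₂ ≠ 0) : (z₁ / z₂, e₁ / e₂) ∈ specializationGraph K y f := by
  have hz₂ : z₂ ≠ 0 := ne_zero_of_mem_specializationGraph hy h₂ he₂
  obtain ⟨p₁, q₁, hq₁, hz₁, he₁⟩ := h₁
  obtain ⟨p₂, q₂, hq₂, hz₂', he₂'⟩ := h₂
  refine ⟨p₁ * q₂, q₁ * p₂, by simp [hq₁, ← he₂', hq₂, he₂], ?_, ?_⟩ <;>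
    simp only [map_mul, ← hz₁, ← he₁, ← hz₂', ← he₂'] <;> field_simp

end Specialization

section PermutationAction

variable {K I : Type} [Field K]

theorem permHom_Xvar (σ : Equiv.Perm I) (i : I) : permHom K I σ (Xvar K I i) = Xvar K I (σ i) := by
  simp [permHom, Xvar, renameHom]

theorem eq_top_of_Xvar_mem {M : IntermediateField K (RFF K I)} (h : ∀ i, Xvar K I i ∈ M) :
    M = ⊤ := by
  have hpoly (p : MvPolynomial I K) : algebraMap _ (RFF K I) p ∈ M := by
    induction p using MvPolynomial.induction_on with
    | C a =>
      exact IsScalarTower.algebraMap_apply K (MvPolynomial I K) (RFF K I) a ▸ M.algebraMap_mem a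
    | add p q hp hq => exact map_add (algebraMap _ (RFF K I)) p q ▸ add_mem hp hq
    | mul_X p i hp => exact map_mul (algebraMap _ (RFF K I)) p _ ▸ mul_mem hp (h i)
  refine eq_top_iff.2 fun z _ ↦ ?_
  obtain ⟨p, q, -, rfl⟩ := IsFractionRing.div_surjective (A := MvPolynomial I K) z
  exact div_mem (hpoly p) (hpoly q)

theorem permHom_injective : Function.Injective (permHom K I) := by
  intro σ τ h
  ext i
  have hX : Xvar K I (σ i) = Xvar K I (τ i) := by rw [← permHom_Xvar, h, permHom_Xvar]
  exact MvPolynomial.X_injective (IsFractionRing.injective (MvPolynomial I K) (RFF K I) hX)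

theorem trdeg_RFF : Algebra.trdeg K (RFF K I) = Cardinal.mk I := by
  have : Algebra.IsAlgebraic (MvPolynomial I K) (RFF K I) :=
    (IsFractionRing.comap_isAlgebraic_iff (K := RFF K I)).2 inferInstance
  simpa using ((IsTranscendenceBasis.mvPolynomial I K).algebraMap_comp
    (A := RFF K I)).cardinalMk_eq_trdeg.symm

theorem mem_fixedSub_closure {S : Set (Equiv.Perm I)} {z : RFF K I}
    (h : ∀ σ ∈ S, permHom K I σ z = z) : z ∈ fixedSub K I (Subgroup.closure S) := by
  have hle : Subgroup.closure S ≤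
      (MulAction.stabilizer (RFF K I ≃ₐ[K] RFF K I) z).comap (permHom K I) :=
    (Subgroup.closure_le _).2 h
  rw [fixedSub, IntermediateField.mem_fixedField_iff]
  rintro _ ⟨σ, hσ, rfl⟩
  exact hle hσ

end PermutationAction

section G12

/-- The permutation `Φ = (1,2,4)(5,6,8)`, on the indices `0, …, 7`. -/
def genPhi : Equiv.Perm (Fin 8) :=
  (Equiv.swap (0 : Fin 8) 1 * Equiv.swap 1 3) * (Equiv.swap (4 : Fin 8) 5 * Equiv.swap 5 7)

/-- The permutation `Ψ̃ = (1,3,5,7)(2,4,6,8)`, on the indices `0, …, 7`. -/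
def genPsi : Equiv.Perm (Fin 8) :=
  (Equiv.swap (0 : Fin 8) 2 * Equiv.swap 2 4 * Equiv.swap 4 6) *
    (Equiv.swap (1 : Fin 8) 3 * Equiv.swap 3 5 * Equiv.swap 5 7)

/-- The group `G₁₂` generated by `Φ` and `Ψ̃`. -/
def G12 : Subgroup (Equiv.Perm (Fin 8)) := Subgroup.closure {genPhi, genPsi}

theorem coe_genPhi : ⇑genPhi = ![1, 3, 2, 0, 5, 7, 6, 4] := by decide +kernel

theorem coe_genPsi : ⇑genPsi = ![2, 3, 4, 5, 6, 7, 0, 1] := by decide +kernel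

theorem genPhi_mem_G12 : genPhi ∈ G12 := Subgroup.subset_closure (.inl rfl)

theorem genPsi_mem_G12 : genPsi ∈ G12 := Subgroup.subset_closure (.inr rfl)

instance : MulAction.IsPretransitive G12 (Fin 8) := by
  let g (k : Fin 8) : G12 :=
    ⟨genPsi, genPsi_mem_G12⟩ ^ (k / 2 : ℕ) * ⟨genPhi, genPhi_mem_G12⟩ ^ (k % 2 : ℕ)
  have hg : ∀ k, g k • (0 : Fin 8) = k := by decide +kernel
  exact (MulAction.isPretransitive_iff_base 0).2 fun k ↦ ⟨g k, hg k⟩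

theorem twentyFour_dvd_card_G12 : 24 ∣ Nat.card G12 := by
  have h8 : 8 ∣ Nat.card G12 := by
    have := Subgroup.index_dvd_card (MulAction.stabilizer G12 (0 : Fin 8))
    rwa [MulAction.index_stabilizer_of_transitive, Nat.card_fin] at this
  have h3 : 3 ∣ Nat.card G12 := by
    have hord : orderOf (⟨genPhi, genPhi_mem_G12⟩ : G12) = 3 :=
      orderOf_eq_prime (by ext1; decide +kernel) (by decide +kernel)
    exact hord ▸ orderOf_dvd_natCard _
  exact Nat.Coprime.mul_dvd_of_dvd_of_dvd (by norm_num) h3 h8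

end G12

section Criterion

open IntermediateField

theorem algEquiv_moment {K F ι : Type*} [Field K] [Field F] [Algebra K F] [Fintype ι]
    {f s : ι → F} (σ : F ≃ₐ[K] F) (τ : Equiv.Perm ι) (hf : ∀ i, σ (f i) = f (τ i))
    (hs : ∀ i, σ (s i) = s (τ i)) (k : ℕ) : σ (∑ i, f i ^ k * s i) = ∑ i, f i ^ k * s i := by
  simp only [map_sum, map_mul, map_pow, hf, hs]
  exact Equiv.sum_comp τ fun i ↦ f i ^ k * s i

/-- The permutation induced by `Φ` on the four blocks `{i, i + 4}` of `G₁₂`. -/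
def pairPhi : Equiv.Perm (Fin 4) := Equiv.swap 0 1 * Equiv.swap 1 3

/-- The permutation induced by `Ψ̃` on the four blocks `{i, i + 4}` of `G₁₂`. -/
def pairPsi : Equiv.Perm (Fin 4) := Equiv.swap 0 2 * Equiv.swap 1 3

theorem coe_pairPhi : ⇑pairPhi = ![1, 3, 2, 0] := by decide +kernel

theorem coe_pairPsi : ⇑pairPsi = ![2, 3, 0, 1] := by decide +kernel

variable {K : Type} [Field K]

/-- The sum of the variables in the block `{i, i + 4}`. -/
def pairSum (K : Type) [Field K] (i : Fin 4) : RFF K (Fin 8) :=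
  Xvar K (Fin 8) (i.castAdd 4) + Xvar K (Fin 8) (i.natAdd 4)

theorem permHom_genPhi_pairSum (i : Fin 4) :
    permHom K (Fin 8) genPhi (pairSum K i) = pairSum K (pairPhi i) := by
  fin_cases i <;> simp [pairSum, permHom_Xvar, coe_genPhi, coe_pairPhi]

theorem permHom_genPsi_pairSum (i : Fin 4) :
    permHom K (Fin 8) genPsi (pairSum K i) = pairSum K (pairPsi i) := by
  fin_cases i <;> simp [pairSum, permHom_Xvar, coe_genPsi, coe_pairPsi, add_comm]

theorem algebraicIndependent_of_adjoin_pairSum {u : Fin 4 → RFF K (Fin 8)}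
    (hu : adjoin K (Set.range u ∪ Set.range (pairSum K)) = ⊤) : AlgebraicIndependent K u := by
  have : AlgebraicIndependent K (Sum.elim u (pairSum K)) :=
    algebraicIndependent_of_adjoin_eq_top (by simp [trdeg_RFF]) (by rwa [Set.Sum.elim_range])
  exact this.comp Sum.inl Sum.inl_injective

theorem isRatExt_fixedSub_G12 {u c : Fin 4 → RFF K (Fin 8)} {P : Polynomial K}
    (hu : adjoin K (Set.range u ∪ Set.range (pairSum K)) = ⊤) (hP : P.natDegree ≠ 0)
    (hΦ : ∀ i, permHom K (Fin 8) genPhi (P.aeval (u i)) = P.aeval (u (pairPhi i)))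
    (hΨ : ∀ i, permHom K (Fin 8) genPsi (P.aeval (u i)) = P.aeval (u (pairPsi i)))
    (hcΦ : ∀ i, permHom K (Fin 8) genPhi (c i) = c i)
    (hcΨ : ∀ i, permHom K (Fin 8) genPsi (c i) = c i)
    (hrank : ∀ L : IntermediateField K (RFF K (Fin 8)), (∀ i, c i ∈ L) →
      (∀ M, L ≤ M → (∀ i, u i ∈ M) → M = ⊤) → Module.rank L (RFF K (Fin 8)) ≤ 24) :
    IsRatExt K (fixedSub K (Fin 8) G12) := by
  set g : Fin 4 → RFF K (Fin 8) := fun i ↦ P.aeval (u i)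
  have hPtr : Transcendental K P := P.transcendental hP
    (mem_nonZeroDivisors_of_ne_zero (Polynomial.leadingCoeff_ne_zero.2 (by rintro rfl; simp at hP)))
  have hg : Function.Injective g :=
    ((algebraicIndependent_of_adjoin_pairSum hu).polynomial_aeval_of_transcendental
      fun _ ↦ hPtr).injective
  set m : Fin 4 → RFF K (Fin 8) := fun k ↦ ∑ i, g i ^ (k : ℕ) * pairSum K i
  set t := Sum.elim c m
  have ht (j) : t j ∈ fixedSub K (Fin 8) G12 := by
    refine mem_fixedSub_closure ?_
    rintro σ (rfl | rfl) <;> rcases j with j | k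
    exacts [hcΦ j, algEquiv_moment _ _ hΦ permHom_genPhi_pairSum k, hcΨ j,
      algEquiv_moment _ _ hΨ permHom_genPsi_pairSum k]
  have ht_mem (j) : t j ∈ adjoin K (Set.range t) := subset_adjoin K _ ⟨j, rfl⟩
  have hle : Module.rank (adjoin K (Set.range t)) (RFF K (Fin 8)) ≤ 24 := by
    refine hrank _ (fun i ↦ ht_mem (.inl i)) fun M hM huM ↦ ?_
    have hgM (i) : g i ∈ M := Algebra.adjoin_le (S := M.toSubalgebra)
      (Set.singleton_subset_iff.2 (huM i)) (Polynomial.aeval_mem_adjoin_singleton K (u i))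
    have hS : ∀ i, pairSum K i ∈ M := mem_of_moments_mem M hg hgM
      fun k hk ↦ hM (ht_mem (.inr ⟨k, by simpa using hk⟩))
    rw [eq_top_iff, ← hu, adjoin_le_iff]
    rintro _ (⟨i, rfl⟩ | ⟨i, rfl⟩)
    exacts [huM i, hS i]
  have hcard : Nat.card (G12.map (permHom K (Fin 8))) = Nat.card G12 :=
    Subgroup.card_map_of_injective permHom_injective
  have : Finite (G12.map (permHom K (Fin 8))) :=
    Nat.finite_of_card_ne_zero (hcard ▸ Nat.card_pos.ne')
  refine isRatExt_fixedField (by simp [trdeg_RFF]) _ ht (hle.trans ?_)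
  rw [hcard]
  exact_mod_cast Nat.le_of_dvd Nat.card_pos twentyFour_dvd_card_G12

end Criterion

section Masuda

/-- The common denominator of Masuda's invariants. -/
def masudaDenom {R : Type*} [CommRing R] (a b c : R) : R :=
  a ^ 2 + b ^ 2 + c ^ 2 - a * b - b * c - c * a

variable {K F E G : Type*} [Field K] [Field F] [Field E] [Algebra K F] [Algebra K E] [FunLike G F E]

theorem prodMk_masudaDenom_mem {S : Subalgebra K (F × E)} {a b c : F} {a' b' c' : E}
    (ha : (a, a') ∈ S) (hb : (b, b') ∈ S) (hc : (c, c') ∈ S) :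
    (masudaDenom a b c, masudaDenom a' b' c') ∈ S :=
  sub_mem (sub_mem (sub_mem (add_mem (add_mem (pow_mem ha 2) (pow_mem hb 2)) (pow_mem hc 2))
    (mul_mem ha hb)) (mul_mem hb hc)) (mul_mem hc ha)

/-- The first of Masuda's invariants: together with `masudaQ` and `a + b + c` it generates the field
of cyclic invariants of `a, b, c`, over any ground field. -/
def masudaP (a b c : F) : F :=
  (a ^ 2 * b + b ^ 2 * c + c ^ 2 * a - 3 * a * b * c) / masudaDenom a b c

/-- The second of Masuda's invariants, the mirror image of `masudaP`. -/
def masudaQ (a b c : F) : F :=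
  (a * b ^ 2 + b * c ^ 2 + c * a ^ 2 - 3 * a * b * c) / masudaDenom a b c

theorem masudaP_rotate (a b c : F) : masudaP b c a = masudaP a b c := by
  unfold masudaP masudaDenom
  congr 1 <;> ring

theorem masudaQ_rotate (a b c : F) : masudaQ b c a = masudaQ a b c := by
  unfold masudaQ masudaDenom
  congr 1 <;> ring

theorem map_masudaP [RingHomClass G F E] (σ : G) (a b c : F) :
    σ (masudaP a b c) = masudaP (σ a) (σ b) (σ c) := by
  simp [masudaP, masudaDenom, map_ofNat]

theorem map_masudaQ [RingHomClass G F E] (σ : G) (a b c : F) :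
    σ (masudaQ a b c) = masudaQ (σ a) (σ b) (σ c) := by
  simp [masudaQ, masudaDenom, map_ofNat]

variable {a b c : F}

theorem masuda_cubic (hD : masudaDenom a b c ≠ 0) :
    let p := masudaP a b c
    let q := masudaQ a b c
    let s := a + b + c
    a ^ 3 = s * a ^ 2 + (3 * (p ^ 2 - p * q + q ^ 2) - s * (p + q)) * a
      + (s * p * q - p ^ 3 - q ^ 3) := by
  simp only [masudaP, masudaQ]
  field_simp
  unfold masudaDenom
  ring

theorem mul_sub_masudaQ (hD : masudaDenom a b c ≠ 0) :
    let p := masudaP a b c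
    let q := masudaQ a b c
    b * (a - q) = p * a - (p ^ 2 - p * q + q ^ 2) := by
  simp only [masudaP, masudaQ]
  field_simp
  unfold masudaDenom
  ring

theorem sub_masudaQ (hD : masudaDenom a b c ≠ 0) :
    a - masudaQ a b c = (a - b) * (a - c) ^ 2 / masudaDenom a b c := by
  unfold masudaQ
  field_simp
  unfold masudaDenom
  ring

theorem mem_of_masuda_mem {M : IntermediateField K F} (hD : masudaDenom a b c ≠ 0) (hab : a ≠ b)
    (hac : a ≠ c) (hp : masudaP a b c ∈ M) (hq : masudaQ a b c ∈ M) (ha : a ∈ M) : b ∈ M := by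
  have hne : a - masudaQ a b c ≠ 0 := by
    rw [sub_masudaQ hD]
    exact div_ne_zero (mul_ne_zero (sub_ne_zero.2 hab) (pow_ne_zero 2 (sub_ne_zero.2 hac))) hD
  rw [eq_div_of_mul_eq hne (mul_sub_masudaQ hD)]
  aesop

theorem rank_le_of_masuda_mem {L : IntermediateField K F} (hD : masudaDenom a b c ≠ 0)
    (hab : a ≠ b) (hac : a ≠ c) (hp : masudaP a b c ∈ L) (hq : masudaQ a b c ∈ L)
    (hs : a + b + c ∈ L) {n : Cardinal}
    (hn : ∀ M, L ≤ M → a ∈ M → b ∈ M → c ∈ M → Module.rank M F ≤ n) : Module.rank L F ≤ 3 * n := by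
  set p := masudaP a b c
  set q := masudaQ a b c
  set s := a + b + c
  refine rank_le_mul_of_pow_eq_sum (d := 3) (α := a)
    (c := ![s * p * q - p ^ 3 - q ^ 3, 3 * (p ^ 2 - p * q + q ^ 2) - s * (p + q), s]) ?_ ?_ ?_
  · rw [masuda_cubic hD]
    simp [Fin.sum_univ_succ, s, p, q]
    ring
  · have : (3 : F) ∈ L := ofNat_mem L 3
    intro i
    fin_cases i <;> simp <;> aesop
  · intro M hM ha
    have hb : b ∈ M := mem_of_masuda_mem hD hab hac (hM hp) (hM hq) ha
    have hc : c = s - a - b := by ring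
    exact hn M hM ha hb (hc ▸ sub_mem (sub_mem (hM hs) ha) hb)

end Masuda

section Rotation

/-- The squared norm of the quaternion `w + x i + y j + z k`. -/
def quatNormSq {R : Type*} [CommRing R] (w x y z : R) : R := w ^ 2 + x ^ 2 + y ^ 2 + z ^ 2

/-- The entry `(1, 1)` of the matrix of the conjugation `v ↦ q v q̄` by the quaternion
`q = w + x i + y j + z k`. Cyclic permutations of `x, y, z` give the other diagonal entries. -/
def rotDiag {R : Type*} [CommRing R] (w x y z : R) : R := w ^ 2 + x ^ 2 - y ^ 2 - z ^ 2

variable {F : Type*} [Field F]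

/-- The ratio of the entries `(2, 1)` and `(1, 1)` of the matrix of the conjugation by
`w + x i + y j + z k`. -/
def rotRatio (w x y z : F) : F := 2 * (x * y + w * z) / rotDiag w x y z

/-- The ratio of the entries `(3, 1)` and `(1, 1)` of the matrix of the conjugation by
`w + x i + y j + z k`. -/
def rotRatio' (w x y z : F) : F := 2 * (x * z - w * y) / rotDiag w x y z

variable {w x y z : F}

theorem rotRatio_add_rotRatio' (h₁ : rotDiag w x y z ≠ 0) (h₂ : rotDiag w y z x ≠ 0) :
    rotRatio w x y z + rotRatio' w y z x + rotRatio' w x y z * rotRatio w y z x = 0 := by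
  unfold rotRatio rotRatio'
  field_simp
  unfold rotDiag
  ring

theorem rotDiag_sq_mul (h₁ : rotDiag w x y z ≠ 0) :
    rotDiag w x y z ^ 2 * (1 + rotRatio w x y z ^ 2 + rotRatio' w x y z ^ 2) =
      quatNormSq w x y z ^ 2 := by
  unfold rotRatio rotRatio'
  field_simp
  unfold rotDiag quatNormSq
  ring

theorem rotDiag_mul_quatNormSq (h₁ : rotDiag w x y z ≠ 0) (h₂ : rotDiag w y z x ≠ 0) :
    rotDiag w z x y * quatNormSq w x y z =
      rotDiag w x y z * rotDiag w y z x * (1 - rotRatio w x y z * rotRatio' w y z x) := by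
  unfold rotRatio rotRatio'
  field_simp
  unfold rotDiag quatNormSq
  ring

theorem four_mul_sq_eq :
    4 * w ^ 2 = quatNormSq w x y z + rotDiag w x y z + rotDiag w y z x + rotDiag w z x y := by
  unfold rotDiag quatNormSq
  ring

theorem four_mul_mul_eq (h₂ : rotDiag w y z x ≠ 0) (h₃ : rotDiag w z x y ≠ 0) :
    4 * w * x = rotDiag w y z x * rotRatio w y z x - rotDiag w z x y * rotRatio' w z x y := by
  unfold rotRatio rotRatio'
  field_simp
  ring

theorem quatNormSq_rotate (w x y z : F) : quatNormSq w y z x = quatNormSq w x y z := by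
  unfold quatNormSq
  ring

theorem rotRatio'_mul (h₁ : rotDiag w x y z ≠ 0) (h₂ : rotDiag w y z x ≠ 0)
    (h₃ : rotDiag w z x y ≠ 0) :
    let a := rotRatio w x y z
    let b := rotRatio w y z x
    let c := rotRatio w z x y
    rotRatio' w x y z * (1 + a * b * c) = a * b - c - a ^ 2 * c := by
  intro a b c
  linear_combination rotRatio_add_rotRatio' h₃ h₁ - a * rotRatio_add_rotRatio' h₂ h₃
    + a * c * rotRatio_add_rotRatio' h₁ h₂

end Rotation

section GenericQuaternion

open IntermediateField

variable {K F : Type*} [Field K] [Field F] [Algebra K F] {w x y z : F}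

theorem algebraicIndependent_rotate (hu : AlgebraicIndependent K ![w, x, y, z]) :
    AlgebraicIndependent K ![w, y, z, x] := by
  have : ![w, y, z, x] = ![w, x, y, z] ∘ ![0, 2, 3, 1] := by ext i; fin_cases i <;> rfl
  exact this ▸ hu.comp _ (by decide)

section Graph

variable {E ι : Type*} [Field E] [Algebra K E] {w' x' y' z' : E}

theorem prodMk_rotDiag_mem {S : Subalgebra K (F × E)} (hw : (w, w') ∈ S) (hx : (x, x') ∈ S)
    (hy : (y, y') ∈ S) (hz : (z, z') ∈ S) : (rotDiag w x y z, rotDiag w' x' y' z') ∈ S :=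
  sub_mem (sub_mem (add_mem (pow_mem hw 2) (pow_mem hx 2)) (pow_mem hy 2)) (pow_mem hz 2)

theorem prodMk_rotRatio_mem_specializationGraph {u : ι → F} {f : ι → E}
    (hu : AlgebraicIndependent K u)
    (hw : (w, w') ∈ specializationGraph K u f) (hx : (x, x') ∈ specializationGraph K u f)
    (hy : (y, y') ∈ specializationGraph K u f) (hz : (z, z') ∈ specializationGraph K u f)
    (hne : rotDiag w' x' y' z' ≠ 0) :
    (rotRatio w x y z, rotRatio w' x' y' z') ∈ specializationGraph K u f :=
  div_mem_specializationGraph hu (mul_mem (ofNat_mem _ 2) (add_mem (mul_mem hx hy) (mul_mem hw hz)))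
    (prodMk_rotDiag_mem hw hx hy hz) hne

end Graph

variable (hu : AlgebraicIndependent K ![w, x, y, z])
include hu

theorem rotDiag_ne_zero : rotDiag w x y z ≠ 0 := by
  have h (i) := prodMk_mem_specializationGraph (K := K) ![w, x, y, z] ![(1 : K), 0, 0, 0] i
  exact ne_zero_of_mem_specializationGraph hu (prodMk_rotDiag_mem (h 0) (h 1) (h 2) (h 3))
    (by simp [rotDiag])

theorem one_add_rotRatio_mul_ne_zero :
    1 + rotRatio w x y z * rotRatio w y z x * rotRatio w z x y ≠ 0 := by
  have h (i) := prodMk_mem_specializationGraph (K := K) ![w, x, y, z] ![(1 : K), 0, 0, 0] i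
  have ha := prodMk_rotRatio_mem_specializationGraph hu (h 0) (h 1) (h 2) (h 3) (by simp [rotDiag])
  have hb := prodMk_rotRatio_mem_specializationGraph hu (h 0) (h 2) (h 3) (h 1) (by simp [rotDiag])
  have hc := prodMk_rotRatio_mem_specializationGraph hu (h 0) (h 3) (h 1) (h 2) (by simp [rotDiag])
  exact ne_zero_of_mem_specializationGraph hu (add_mem (one_mem _) (mul_mem (mul_mem ha hb) hc))
    (by simp [rotRatio])

theorem quatNormSq_ne_zero : quatNormSq w x y z ≠ 0 := by
  have h (i) := prodMk_mem_specializationGraph (K := K) ![w, x, y, z] ![(1 : K), 0, 0, 0] i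
  exact ne_zero_of_mem_specializationGraph hu (add_mem (add_mem (add_mem (pow_mem (h 0) 2)
    (pow_mem (h 1) 2)) (pow_mem (h 2) 2)) (pow_mem (h 3) 2)) (by simp)

theorem prodMk_rotRatio_mem_specializationGraph_point :
    let S := specializationGraph K ![w, x, y, z] ![(1 : K), 0, 1, 1]
    (rotRatio w x y z, -2) ∈ S ∧ (rotRatio w y z x, 2) ∈ S ∧ (rotRatio w z x y, 2) ∈ S := by
  have h (i) := prodMk_mem_specializationGraph (K := K) ![w, x, y, z] ![(1 : K), 0, 1, 1] i
  have ha := prodMk_rotRatio_mem_specializationGraph hu (h 0) (h 1) (h 2) (h 3) (by simp [rotDiag])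
  have hb := prodMk_rotRatio_mem_specializationGraph hu (h 0) (h 2) (h 3) (h 1) (by simp [rotDiag])
  have hc := prodMk_rotRatio_mem_specializationGraph hu (h 0) (h 3) (h 1) (h 2) (by simp [rotDiag])
  simpa [rotRatio, rotDiag, div_neg] using And.intro ha (And.intro hb hc)

variable (h2 : (2 : K) ≠ 0)
include h2

theorem rotRatio_ne :
    rotRatio w x y z ≠ rotRatio w y z x ∧ rotRatio w x y z ≠ rotRatio w z x y := by
  obtain ⟨ha, hb, hc⟩ := prodMk_rotRatio_mem_specializationGraph_point hu
  have hne : (-2 - 2 : K) ≠ 0 := by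
    have : (-2 - 2 : K) = - (2 * 2) := by ring
    simpa [this] using h2
  exact ⟨sub_ne_zero.1 (ne_zero_of_mem_specializationGraph hu (sub_mem ha hb) hne),
    sub_ne_zero.1 (ne_zero_of_mem_specializationGraph hu (sub_mem ha hc) hne)⟩

theorem masudaDenom_rotRatio_ne_zero :
    masudaDenom (rotRatio w x y z) (rotRatio w y z x) (rotRatio w z x y) ≠ 0 := by
  obtain ⟨ha, hb, hc⟩ := prodMk_rotRatio_mem_specializationGraph_point hu
  have hne : masudaDenom (-2) 2 2 = (2 : K) ^ 4 := by
    unfold masudaDenom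
    ring
  exact ne_zero_of_mem_specializationGraph hu (prodMk_masudaDenom_mem ha hb hc)
    (hne ▸ pow_ne_zero 4 h2)

end GenericQuaternion

section QuaternionTower

open IntermediateField

variable {K F : Type*} [Field K] [Field F] [Algebra K F] {w x y z : F} {M : IntermediateField K F}

/-- The rotation matrix of the quaternion `w + x i + y j + z k` is defined over `M` up to the
scaling of its columns. -/
structure RotRatioMem (M : IntermediateField K F) (w x y z : F) : Prop where
  fst : rotRatio w x y z ∈ M
  snd : rotRatio w y z x ∈ M
  trd : rotRatio w z x y ∈ M

theorem RotRatioMem.rotate (h : RotRatioMem M w x y z) : RotRatioMem M w y z x :=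
  ⟨h.snd, h.trd, h.fst⟩

theorem RotRatioMem.mono (h : RotRatioMem M w x y z) {N : IntermediateField K F} (hMN : M ≤ N) :
    RotRatioMem N w x y z :=
  ⟨hMN h.fst, hMN h.snd, hMN h.trd⟩

theorem RotRatioMem.rotRatio'_mem (h : RotRatioMem M w x y z)
    (hu : AlgebraicIndependent K ![w, x, y, z]) : rotRatio' w x y z ∈ M := by
  have hu₂ := algebraicIndependent_rotate hu
  have hmul := rotRatio'_mul (rotDiag_ne_zero hu) (rotDiag_ne_zero hu₂)
    (rotDiag_ne_zero (algebraicIndependent_rotate hu₂))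
  rw [eq_div_of_mul_eq (one_add_rotRatio_mul_ne_zero hu) hmul]
  obtain ⟨ha, hb, hc⟩ := h
  aesop

theorem RotRatioMem.rotDiag_sq_mem (h : RotRatioMem M w x y z)
    (hu : AlgebraicIndependent K ![w, x, y, z]) (hN : quatNormSq w x y z ∈ M) :
    rotDiag w x y z ^ 2 ∈ M := by
  have hmul := rotDiag_sq_mul (rotDiag_ne_zero hu)
  have hne : 1 + rotRatio w x y z ^ 2 + rotRatio' w x y z ^ 2 ≠ 0 :=
    right_ne_zero_of_mul (hmul ▸ pow_ne_zero 2 (quatNormSq_ne_zero hu))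
  rw [eq_div_of_mul_eq hne hmul]
  have ha := h.fst
  have ha' := h.rotRatio'_mem hu
  aesop

theorem RotRatioMem.rotDiag_mem (h : RotRatioMem M w x y z)
    (hu : AlgebraicIndependent K ![w, x, y, z]) (hN : quatNormSq w x y z ∈ M)
    (h₁ : rotDiag w x y z ∈ M) (h₂ : rotDiag w y z x ∈ M) : rotDiag w z x y ∈ M := by
  have hu₂ := algebraicIndependent_rotate hu
  rw [eq_div_of_mul_eq (quatNormSq_ne_zero hu)
    (rotDiag_mul_quatNormSq (rotDiag_ne_zero hu) (rotDiag_ne_zero hu₂))]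
  have ha := h.fst
  have hb' := h.rotate.rotRatio'_mem hu₂
  aesop

theorem four_ne_zero_of_two_ne_zero (h2 : (2 : K) ≠ 0) : (4 : F) ≠ 0 := by
  have h4 : (4 : F) = algebraMap K F (2 * 2) := by norm_num [map_ofNat]
  exact h4 ▸ (map_ne_zero _).2 (mul_ne_zero h2 h2)

theorem sq_mem_of_rotDiag_mem (h2 : (2 : K) ≠ 0) (hN : quatNormSq w x y z ∈ M)
    (h₁ : rotDiag w x y z ∈ M) (h₂ : rotDiag w y z x ∈ M) (h₃ : rotDiag w z x y ∈ M) :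
    w ^ 2 ∈ M := by
  have h4 : (4 : F) ≠ 0 := four_ne_zero_of_two_ne_zero h2
  rw [eq_div_of_mul_eq h4 ((mul_comm _ _).trans (four_mul_sq_eq (x := x) (y := y) (z := z)))]
  have : (4 : F) ∈ M := ofNat_mem M 4
  aesop

theorem RotRatioMem.imag_mem (h : RotRatioMem M w x y z) (h2 : (2 : K) ≠ 0)
    (hu : AlgebraicIndependent K ![w, x, y, z]) (hw : w ∈ M) (h₂ : rotDiag w y z x ∈ M)
    (h₃ : rotDiag w z x y ∈ M) : x ∈ M := by
  have hu₂ := algebraicIndependent_rotate hu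
  have hu₃ := algebraicIndependent_rotate hu₂
  have hmul := four_mul_mul_eq (rotDiag_ne_zero hu₂) (rotDiag_ne_zero hu₃)
  have hne : 4 * w ≠ 0 := mul_ne_zero (four_ne_zero_of_two_ne_zero h2) (hu.ne_zero 0)
  rw [eq_div_of_mul_eq hne ((mul_comm _ _).trans hmul)]
  have hb := h.snd
  have hc' := h.rotate.rotate.rotRatio'_mem hu₃
  have : (4 : F) ∈ M := ofNat_mem M 4
  aesop

theorem RotRatioMem.rank_le (h : RotRatioMem M w x y z) (h2 : (2 : K) ≠ 0)
    (hu : AlgebraicIndependent K ![w, x, y, z]) (hN : quatNormSq w x y z ∈ M)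
    (htop : ∀ N, M ≤ N → w ∈ N → x ∈ N → y ∈ N → z ∈ N → N = ⊤) : Module.rank M F ≤ 8 := by
  have hu₂ := algebraicIndependent_rotate hu
  have hu₃ := algebraicIndependent_rotate hu₂
  suffices Module.rank M F ≤ 2 * (2 * (2 * 1)) from this.trans_eq (by norm_num)
  refine rank_le_two_mul_of_sq_eq (α := rotDiag w x y z) (by rw [zero_mul, zero_add])
    (zero_mem M) (h.rotDiag_sq_mem hu hN) fun M₁ hM₁ hρ₁ ↦ ?_
  replace h := h.mono hM₁
  replace hN := hM₁ hN
  refine rank_le_two_mul_of_sq_eq (α := rotDiag w y z x) (by rw [zero_mul, zero_add])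
    (zero_mem M₁) (h.rotate.rotDiag_sq_mem hu₂ (quatNormSq_rotate w x y z ▸ hN))
    fun M₂ hM₂ hρ₂ ↦ ?_
  replace h := h.mono hM₂
  replace hρ₁ := hM₂ hρ₁
  have hρ₃ : rotDiag w z x y ∈ M₂ := h.rotDiag_mem hu (hM₂ hN) hρ₁ hρ₂
  refine rank_le_two_mul_of_sq_eq (α := w) (by rw [zero_mul, zero_add]) (zero_mem M₂)
    (sq_mem_of_rotDiag_mem h2 (hM₂ hN) hρ₁ hρ₂ hρ₃) fun M₃ hM₃ hw ↦ ?_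
  replace h := h.mono hM₃
  have hx : x ∈ M₃ := h.imag_mem h2 hu hw (hM₃ hρ₂) (hM₃ hρ₃)
  have hy : y ∈ M₃ := h.rotate.imag_mem h2 hu₂ hw (hM₃ hρ₃) (hM₃ hρ₁)
  have hz : z ∈ M₃ := h.rotate.rotate.imag_mem h2 hu₃ hw (hM₃ hρ₁) (hM₃ hρ₂)
  rw [htop M₃ (hM₁.trans (hM₂.trans hM₃)) hw hx hy hz, IntermediateField.rank_top]

end QuaternionTower

section OddCharacteristic

open IntermediateField

variable {F : Type*} [Field F]

/-- The four invariants of `G₁₂` in the differences `xᵢ - xᵢ₊₄`, used in characteristic other than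
two. -/
def quatInvariant (w x y z : F) : Fin 4 → F :=
  ![masudaP (rotRatio w x y z) (rotRatio w y z x) (rotRatio w z x y),
    masudaQ (rotRatio w x y z) (rotRatio w y z x) (rotRatio w z x y),
    rotRatio w x y z + rotRatio w y z x + rotRatio w z x y, quatNormSq w x y z]

theorem quatInvariant_rotate (w x y z : F) : quatInvariant w y z x = quatInvariant w x y z := by
  unfold quatInvariant
  rw [masudaP_rotate, masudaQ_rotate, quatNormSq_rotate, ← add_rotate]

theorem rotRatio_mul_unit (w x y z : F) : rotRatio (-x) w z (-y) = rotRatio w x y z ∧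
    rotRatio (-x) z (-y) w = rotRatio w y z x ∧ rotRatio (-x) (-y) w z = rotRatio w z x y := by
  unfold rotRatio rotDiag
  refine ⟨by congr 1 <;> ring, ?_, ?_⟩ <;> rw [← neg_div_neg_eq] <;> congr 1 <;> ring

theorem quatInvariant_mul_unit (w x y z : F) :
    quatInvariant (-x) w z (-y) = quatInvariant w x y z := by
  obtain ⟨ha, hb, hc⟩ := rotRatio_mul_unit w x y z
  have hN : quatNormSq (-x) w z (-y) = quatNormSq w x y z := by
    unfold quatNormSq
    ring
  unfold quatInvariant
  rw [ha, hb, hc, hN]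

theorem map_quatInvariant {E G : Type*} [Field E] [FunLike G F E] [RingHomClass G F E] (σ : G)
    (w x y z : F) (i : Fin 4) :
    σ (quatInvariant w x y z i) = quatInvariant (σ w) (σ x) (σ y) (σ z) i := by
  fin_cases i <;>
    simp [quatInvariant, map_masudaP, map_masudaQ, rotRatio, rotDiag, quatNormSq, map_ofNat]

theorem rank_le_of_quatInvariant_mem {K : Type*} [Field K] [Algebra K F]
    {L : IntermediateField K F} {w x y z : F} (h2 : (2 : K) ≠ 0)
    (hu : AlgebraicIndependent K ![w, x, y, z]) (hL : ∀ i, quatInvariant w x y z i ∈ L)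
    (htop : ∀ M, L ≤ M → w ∈ M → x ∈ M → y ∈ M → z ∈ M → M = ⊤) : Module.rank L F ≤ 24 := by
  obtain ⟨hab, hac⟩ := rotRatio_ne hu h2
  suffices Module.rank L F ≤ 3 * 8 from this.trans_eq (by norm_num)
  refine rank_le_of_masuda_mem (masudaDenom_rotRatio_ne_zero hu h2) hab hac (hL 0) (hL 1) (hL 2) ?_
  intro M hLM ha hb hc
  exact RotRatioMem.rank_le ⟨ha, hb, hc⟩ h2 hu (hLM (hL 3)) fun N hN ↦ htop N (hLM.trans hN)

variable {K : Type} [Field K]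

/-- The difference of the variables in the block `{i, i + 4}`. -/
def pairDiff (K : Type) [Field K] (i : Fin 4) : RFF K (Fin 8) :=
  Xvar K (Fin 8) (i.castAdd 4) - Xvar K (Fin 8) (i.natAdd 4)

theorem permHom_genPhi_pairDiff (i : Fin 4) :
    permHom K (Fin 8) genPhi (pairDiff K i) = pairDiff K (pairPhi i) := by
  fin_cases i <;> simp [pairDiff, permHom_Xvar, coe_genPhi, coe_pairPhi]

theorem permHom_genPsi_pairDiff (i : Fin 4) : permHom K (Fin 8) genPsi (pairDiff K i) =
    ![1, 1, -1, -1] i * pairDiff K (pairPsi i) := by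
  fin_cases i <;> simp [pairDiff, permHom_Xvar, coe_genPsi, coe_pairPsi]

theorem adjoin_pairDiff_pairSum (h2 : (2 : K) ≠ 0) :
    adjoin K (Set.range (pairDiff K) ∪ Set.range (pairSum K)) = ⊤ := by
  set M := adjoin K (Set.range (pairDiff K) ∪ Set.range (pairSum K))
  have hD (i) : pairDiff K i ∈ M := subset_adjoin K _ (.inl ⟨i, rfl⟩)
  have hS (i) : pairSum K i ∈ M := subset_adjoin K _ (.inr ⟨i, rfl⟩)
  have h2F : (2 : RFF K (Fin 8)) ≠ 0 := by
    rw [← map_ofNat (algebraMap K (RFF K (Fin 8))) 2]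
    exact (map_ne_zero _).2 h2
  have hX₁ (i : Fin 4) : Xvar K (Fin 8) (i.castAdd 4) = (pairSum K i + pairDiff K i) / 2 := by
    unfold pairSum pairDiff
    field
  have hX₂ (i : Fin 4) : Xvar K (Fin 8) (i.natAdd 4) = (pairSum K i - pairDiff K i) / 2 := by
    unfold pairSum pairDiff
    field
  refine eq_top_of_Xvar_mem fun j ↦ ?_
  induction j using Fin.addCases (m := 4) (n := 4) with
  | left i => exact hX₁ i ▸ div_mem (add_mem (hS i) (hD i)) (ofNat_mem M 2)
  | right i => exact hX₂ i ▸ div_mem (sub_mem (hS i) (hD i)) (ofNat_mem M 2)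

theorem isRatExt_fixedSub_G12_of_two_ne_zero (h2 : (2 : K) ≠ 0) :
    IsRatExt K (fixedSub K (Fin 8) G12) := by
  set D := pairDiff K
  have hgen := adjoin_pairDiff_pairSum h2
  have hu : AlgebraicIndependent K ![D 2, D 0, D 1, D 3] := by
    have : ![D 2, D 0, D 1, D 3] = D ∘ ![2, 0, 1, 3] := by ext i; fin_cases i <;> rfl
    exact this ▸ (algebraicIndependent_of_adjoin_pairSum hgen).comp _ (by decide)
  refine isRatExt_fixedSub_G12 (u := D) (c := quatInvariant (D 2) (D 0) (D 1) (D 3)) (P := .X ^ 2)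
    hgen (by simp) ?_ ?_ ?_ ?_ ?_
  · simp [D, permHom_genPhi_pairDiff]
  · intro i
    fin_cases i <;> simp [D, permHom_genPsi_pairDiff]
  · intro i
    simp only [map_quatInvariant, D, permHom_genPhi_pairDiff]
    simp only [coe_pairPhi]
    exact congrFun (quatInvariant_rotate _ _ _ _) i
  · intro i
    simp only [map_quatInvariant, D, permHom_genPsi_pairDiff]
    simpa [coe_pairPsi] using congrFun (quatInvariant_mul_unit _ _ _ _) i
  · intro L hL htop
    refine rank_le_of_quatInvariant_mem h2 hu hL fun M hLM hw hx hy hz ↦ htop M hLM fun i ↦ ?_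
    fin_cases i
    exacts [hx, hy, hw, hz]

end OddCharacteristic

section ArtinSchreier

open IntermediateField

section CommRing

variable {R S : Type*} [CommRing R] [SetLike S R] [SubringClass S R]

/-- The coefficient `d = t² + t + 1`, with `t = p + q + r`, in the quadratic equation of
`evenRoot`. -/
def evenDisc (p q r : R) : R := (p + q + r) ^ 2 + (p + q + r) + 1

/-- The linear form `l` in `p, q, r` with coefficients in the field of `t = p + q + r` satisfying
`l² + d l + t = a`, where `d` is `evenDisc` and `a` is `evenParam`. -/
def evenRoot (p q r : R) : R := (p + q + r + 1) * p + q + (p + q + r) ^ 2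

/-- The analogue of `rotRatio` in characteristic two: together with its rotations it generates the
field of functions of `p, q, r` fixed by the translations by `(1, t + 1, t)` and its rotations,
where `t = p + q + r`. -/
def evenParam (p q r : R) : R :=
  evenRoot p q r ^ 2 + evenDisc p q r * evenRoot p q r + (p + q + r)

/-- The coefficient of `v ^ 2 + v` in `evenForm`. -/
def evenMinor (p q r : R) : R := p * q + q * r + r * p

/-- The analogue of `quatNormSq` in characteristic two: a combination of the functions `u ^ 2 + u`,
where `u` is `v`, `v + p`, `v + q` or `v + r`, that is invariant under the quaternion group. -/
def evenForm (v p q r : R) : R :=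
  (v ^ 2 + v) * evenMinor p q r +
    ((v + p) ^ 2 + (v + p)) * (evenMinor p q r + evenRoot p q r + evenDisc p q r) +
    ((v + q) ^ 2 + (v + q)) * (evenMinor p q r + evenRoot q r p + evenDisc p q r) +
    ((v + r) ^ 2 + (v + r)) * (evenMinor p q r + evenRoot r p q + evenDisc p q r)

theorem evenParam_prodMk {R' : Type*} [CommRing R'] (p q r : R) (p' q' r' : R') :
    evenParam (p, p') (q, q') (r, r') = (evenParam p q r, evenParam p' q' r') := by
  simp [Prod.ext_iff, evenParam, evenRoot, evenDisc]

theorem evenForm_rotate (v p q r : R) : evenForm v q r p = evenForm v p q r := by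
  unfold evenForm evenMinor evenDisc
  ring

variable {M : S} {p q r : R}

theorem evenDisc_mem (ht : p + q + r ∈ M) : evenDisc p q r ∈ M :=
  add_mem (add_mem (pow_mem ht 2) ht) (one_mem M)

theorem evenRoot_mem (hp : p ∈ M) (hq : q ∈ M) (hr : r ∈ M) : evenRoot p q r ∈ M :=
  have ht := add_mem (add_mem hp hq) hr
  add_mem (add_mem (mul_mem (add_mem ht (one_mem M)) hp) hq) (pow_mem ht 2)

theorem evenParam_mem (hp : p ∈ M) (hq : q ∈ M) (hr : r ∈ M) : evenParam p q r ∈ M :=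
  have ht := add_mem (add_mem hp hq) hr
  have hl := evenRoot_mem hp hq hr
  add_mem (add_mem (pow_mem hl 2) (mul_mem (evenDisc_mem ht) hl)) ht

theorem evenMinor_mem (hp : p ∈ M) (hq : q ∈ M) (hr : r ∈ M) : evenMinor p q r ∈ M :=
  add_mem (add_mem (mul_mem hp hq) (mul_mem hq hr)) (mul_mem hr hp)

variable [CharP R 2]

theorem evenRoot_sq (p q r : R) :
    evenRoot p q r ^ 2 = evenDisc p q r * evenRoot p q r + (evenParam p q r + (p + q + r)) := by
  unfold evenParam
  grind

theorem evenParam_add_evenParam_add_evenParam (p q r : R) :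
    evenParam p q r + evenParam q r p + evenParam r p q = p + q + r := by
  unfold evenParam evenRoot evenDisc
  grind

theorem mul_evenDisc (p q r : R) : p * evenDisc p q r =
    evenRoot q r p + (p + q + r) * (evenRoot p q r + (p + q + r) + (p + q + r) ^ 2 + 1) := by
  unfold evenRoot evenDisc
  grind

theorem eq_evenRoot_add (p q r : R) :
    q = evenRoot p q r + (p + q + r) ^ 2 + (p + q + r + 1) * p := by
  unfold evenRoot
  grind

theorem sq_add_self_mul_evenDisc (v p q r : R) : (v ^ 2 + v) * evenDisc p q r = evenForm v p q r +
    (p ^ 2 + p) * (evenMinor p q r + evenRoot p q r + evenDisc p q r) +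
    (q ^ 2 + q) * (evenMinor p q r + evenRoot q r p + evenDisc p q r) +
    (r ^ 2 + r) * (evenMinor p q r + evenRoot r p q + evenDisc p q r) := by
  unfold evenForm evenMinor evenRoot evenDisc
  grind

theorem evenParam_translate (p q r : R) :
    evenParam (p + 1) (r + p + 1) (p + q) = evenParam p q r ∧
    evenParam (r + p + 1) (p + q) (p + 1) = evenParam q r p ∧
    evenParam (p + q) (p + 1) (r + p + 1) = evenParam r p q := by
  unfold evenParam evenRoot evenDisc
  refine ⟨?_, ?_, ?_⟩ <;> grind

theorem evenForm_translate (v p q r : R) :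
    evenForm (v + p + 1) (p + 1) (r + p + 1) (p + q) = evenForm v p q r := by
  unfold evenForm evenMinor evenRoot evenDisc
  grind

end CommRing

section Field

variable {K F : Type*} [Field K] [Field F] [CharP F 2] [Algebra K F] {M : IntermediateField K F}
  {v p q r : F}

theorem mem_of_evenRoot_mem (hd : evenDisc p q r ≠ 0) (ht : p + q + r ∈ M)
    (h₁ : evenRoot p q r ∈ M) (h₂ : evenRoot q r p ∈ M) : p ∈ M ∧ q ∈ M ∧ r ∈ M := by
  have hp : p ∈ M := by
    rw [eq_div_of_mul_eq hd (mul_evenDisc p q r)]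
    exact div_mem (add_mem h₂ (mul_mem ht
      (add_mem (add_mem (add_mem h₁ ht) (pow_mem ht 2)) (one_mem M)))) (evenDisc_mem ht)
  have hq : q ∈ M := by
    rw [eq_evenRoot_add p q r]
    exact add_mem (add_mem h₁ (pow_mem ht 2)) (mul_mem (add_mem ht (one_mem M)) hp)
  have hr : r = p + q + r - p - q := by ring
  exact ⟨hp, hq, hr ▸ sub_mem (sub_mem ht hp) hq⟩

theorem sq_add_self_mem_of_evenForm_mem (hd : evenDisc p q r ≠ 0) (hp : p ∈ M) (hq : q ∈ M)
    (hr : r ∈ M) (hT : evenForm v p q r ∈ M) : v ^ 2 + v ∈ M := by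
  have hdM : evenDisc p q r ∈ M := evenDisc_mem (add_mem (add_mem hp hq) hr)
  have hterm {u l : F} (hu : u ∈ M) (hl : l ∈ M) :
      (u ^ 2 + u) * (evenMinor p q r + l + evenDisc p q r) ∈ M :=
    mul_mem (add_mem (pow_mem hu 2) hu) (add_mem (add_mem (evenMinor_mem hp hq hr) hl) hdM)
  rw [eq_div_of_mul_eq hd (sq_add_self_mul_evenDisc v p q r)]
  exact div_mem (add_mem (add_mem (add_mem hT (hterm hp (evenRoot_mem hp hq hr)))
    (hterm hq (evenRoot_mem hq hr hp))) (hterm hr (evenRoot_mem hr hp hq))) hdM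

theorem rank_le_of_evenParam_mem (hd : evenDisc p q r ≠ 0) (ha : evenParam p q r ∈ M)
    (hb : evenParam q r p ∈ M) (ht : p + q + r ∈ M) (hT : evenForm v p q r ∈ M)
    (htop : ∀ N, M ≤ N → v ∈ N → p ∈ N → q ∈ N → r ∈ N → N = ⊤) : Module.rank M F ≤ 8 := by
  suffices Module.rank M F ≤ 2 * (2 * (2 * 1)) from this.trans_eq (by norm_num)
  refine rank_le_two_mul_of_sq_eq (evenRoot_sq p q r) (evenDisc_mem ht) (add_mem ha ht)
    fun M₁ hM₁ h₁ ↦ ?_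
  have ht' : q + r + p ∈ M := add_rotate p q r ▸ ht
  refine rank_le_two_mul_of_sq_eq (evenRoot_sq q r p) (hM₁ (evenDisc_mem ht'))
    (hM₁ (add_mem hb ht')) fun M₂ hM₂ h₂ ↦ ?_
  have hM := hM₁.trans hM₂
  obtain ⟨hp, hq, hr⟩ := mem_of_evenRoot_mem hd (hM ht) (hM₂ h₁) h₂
  have hv : v ^ 2 = 1 * v + (v ^ 2 + v) := by grind
  refine rank_le_two_mul_of_sq_eq hv (one_mem M₂)
    (sq_add_self_mem_of_evenForm_mem hd hp hq hr (hM hT)) fun M₃ hM₃ hvM ↦ ?_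
  rw [htop M₃ (hM.trans hM₃) hvM (hM₃ hp) (hM₃ hq) (hM₃ hr), IntermediateField.rank_top]

end Field

end ArtinSchreier

section EvenCharacteristic

open IntermediateField

section Field

variable {K F : Type*} [Field K] [Field F]

/-- The four invariants of `G₁₂` in the ratios `xᵢ / (xᵢ + xᵢ₊₄)`, in characteristic two. -/
def evenInvariant (w x y z : F) : Fin 4 → F :=
  let p := x + w
  let q := y + w
  let r := z + w
  ![masudaP (evenParam p q r) (evenParam q r p) (evenParam r p q),
    masudaQ (evenParam p q r) (evenParam q r p) (evenParam r p q), p + q + r, evenForm w p q r]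

theorem evenInvariant_rotate (w x y z : F) : evenInvariant w y z x = evenInvariant w x y z := by
  simp only [evenInvariant]
  rw [masudaP_rotate, masudaQ_rotate, evenForm_rotate, ← add_rotate]

theorem evenInvariant_translate [CharP F 2] (w x y z : F) :
    evenInvariant (x + 1) w z (y + 1) = evenInvariant w x y z := by
  have hv : x + 1 = w + (x + w) + 1 := by grind
  have hp : w + (x + 1) = (x + w) + 1 := by ring
  have hq : z + (x + 1) = (z + w) + (x + w) + 1 := by grind
  have hr : (y + 1) + (x + 1) = (x + w) + (y + w) := by grind
  have ht : (x + w) + 1 + ((z + w) + (x + w) + 1) + ((x + w) + (y + w)) =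
      (x + w) + (y + w) + (z + w) := by grind
  obtain ⟨ha, hb, hc⟩ := evenParam_translate (x + w) (y + w) (z + w)
  simp only [evenInvariant, hp, hq, hr, ha, hb, hc, ht]
  rw [hv, evenForm_translate]

theorem map_evenInvariant {E G : Type*} [Field E] [FunLike G F E] [RingHomClass G F E] (σ : G)
    (w x y z : F) (i : Fin 4) :
    σ (evenInvariant w x y z i) = evenInvariant (σ w) (σ x) (σ y) (σ z) i := by
  fin_cases i <;> simp [evenInvariant, map_masudaP, map_masudaQ, evenParam, evenForm, evenMinor,
    evenRoot, evenDisc]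

variable [Algebra K F] {w x y z : F}

theorem evenDisc_ne_zero (hu : AlgebraicIndependent K ![w, x, y, z]) :
    evenDisc (x + w) (y + w) (z + w) ≠ 0 := by
  have h (i) := prodMk_mem_specializationGraph (K := K) ![w, x, y, z] ![(0 : K), 0, 0, 0] i
  have hd := evenDisc_mem (add_mem (add_mem (add_mem (h 1) (h 0)) (add_mem (h 2) (h 0)))
    (add_mem (h 3) (h 0)))
  exact ne_zero_of_mem_specializationGraph hu hd (by simp)

variable [CharP K 2]

theorem exists_specializationGraph_evenParam (w x y z : F) :
    ∃ f : Fin 4 → AlgebraicClosure K,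
      (evenParam (x + w) (y + w) (z + w), 0) ∈ specializationGraph K ![w, x, y, z] f ∧
      (evenParam (y + w) (z + w) (x + w), 1) ∈ specializationGraph K ![w, x, y, z] f ∧
      (evenParam (z + w) (x + w) (y + w), 1) ∈ specializationGraph K ![w, x, y, z] f := by
  have : CharP (AlgebraicClosure K) 2 := charP_of_injective_algebraMap' K 2
  have hdeg : (.X ^ 2 + .X + 1 : Polynomial (AlgebraicClosure K)).degree ≠ 0 := by
    have : (.X ^ 2 + .X + 1 : Polynomial (AlgebraicClosure K)).degree = 2 := by compute_degree!
    simp [this]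
  obtain ⟨ω, hω⟩ := IsAlgClosed.exists_root _ hdeg
  replace hω : ω ^ 2 + ω + 1 = 0 := by simpa using hω
  have h (i) := prodMk_mem_specializationGraph (K := K) ![w, x, y, z] ![0, ω, ω, 0] i
  have hp : (x + w, ω) ∈ specializationGraph K ![w, x, y, z] ![0, ω, ω, 0] := by
    simpa using add_mem (h 1) (h 0)
  have hq : (y + w, ω) ∈ specializationGraph K ![w, x, y, z] ![0, ω, ω, 0] := by
    simpa using add_mem (h 2) (h 0)
  have hr : (z + w, 0) ∈ specializationGraph K ![w, x, y, z] ![0, ω, ω, 0] := by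
    simpa using add_mem (h 3) (h 0)
  have ha : evenParam ω ω 0 = 0 := by
    unfold evenParam evenRoot evenDisc
    grind
  have hb : evenParam ω 0 ω = 1 := by
    unfold evenParam evenRoot evenDisc
    grind
  have hc : evenParam 0 ω ω = 1 := by
    unfold evenParam evenRoot evenDisc
    grind
  refine ⟨![0, ω, ω, 0], ?_, ?_, ?_⟩
  · simpa only [evenParam_prodMk, ha] using evenParam_mem hp hq hr
  · simpa only [evenParam_prodMk, hb] using evenParam_mem hq hr hp
  · simpa only [evenParam_prodMk, hc] using evenParam_mem hr hp hq

theorem rank_le_of_evenInvariant_mem {L : IntermediateField K F}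
    (hu : AlgebraicIndependent K ![w, x, y, z]) (hL : ∀ i, evenInvariant w x y z i ∈ L)
    (htop : ∀ M, L ≤ M → w ∈ M → x ∈ M → y ∈ M → z ∈ M → M = ⊤) : Module.rank L F ≤ 24 := by
  have : CharP F 2 := charP_of_injective_algebraMap' K 2
  obtain ⟨f, ha, hb, hc⟩ := exists_specializationGraph_evenParam (K := K) w x y z
  have hab := sub_ne_zero.1 (ne_zero_of_mem_specializationGraph hu (sub_mem ha hb) (by simp))
  have hac := sub_ne_zero.1 (ne_zero_of_mem_specializationGraph hu (sub_mem ha hc) (by simp))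
  have hD := ne_zero_of_mem_specializationGraph hu (prodMk_masudaDenom_mem ha hb hc)
    (by simp [masudaDenom])
  suffices Module.rank L F ≤ 3 * 8 from this.trans_eq (by norm_num)
  refine rank_le_of_masuda_mem hD hab hac (hL 0) (hL 1)
    (evenParam_add_evenParam_add_evenParam (x + w) (y + w) (z + w) ▸ hL 2) fun M hLM haM hbM _ ↦ ?_
  refine rank_le_of_evenParam_mem (evenDisc_ne_zero hu) haM hbM (hLM (hL 2)) (hLM (hL 3))
    fun N hMN hw hx hy hz ↦ ?_
  have hmem {u : F} (hu : u + w ∈ N) : u ∈ N := by simpa using sub_mem hu hw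
  exact htop N (hLM.trans hMN) hw (hmem hx) (hmem hy) (hmem hz)

end Field

variable {K : Type} [Field K]

/-- The ratio of the first variable in the block `{i, i + 4}` to the sum of the variables. -/
def pairRatio (K : Type) [Field K] (i : Fin 4) : RFF K (Fin 8) :=
  Xvar K (Fin 8) (i.castAdd 4) / pairSum K i

theorem pairSum_ne_zero (i : Fin 4) : pairSum K i ≠ 0 := by
  have hne : i.natAdd 4 ≠ i.castAdd 4 := by simp [Fin.ext_iff]
  have hX : (.X (i.castAdd 4) + .X (i.natAdd 4) : MvPolynomial (Fin 8) K) ≠ 0 := fun h ↦ by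
    simpa [-Fin.natAdd_eq_addNat, hne] using
      congrArg (MvPolynomial.eval (Pi.single (i.castAdd 4) 1)) h
  rw [pairSum, Xvar, Xvar, ← map_add]
  exact (map_ne_zero_iff _ (IsFractionRing.injective _ _)).2 hX

theorem permHom_genPhi_pairRatio (i : Fin 4) :
    permHom K (Fin 8) genPhi (pairRatio K i) = pairRatio K (pairPhi i) := by
  rw [pairRatio, map_div₀, permHom_genPhi_pairSum]
  fin_cases i <;> simp [pairRatio, permHom_Xvar, coe_genPhi, coe_pairPhi]

theorem Xvar_natAdd_div_pairSum [CharP K 2] (i : Fin 4) :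
    Xvar K (Fin 8) (i.natAdd 4) / pairSum K i = pairRatio K i + 1 := by
  have : CharP (RFF K (Fin 8)) 2 := charP_of_injective_algebraMap' K 2
  rw [pairRatio, div_add_one (pairSum_ne_zero i)]
  congr 1
  unfold pairSum
  grind

theorem permHom_genPsi_pairRatio [CharP K 2] (i : Fin 4) :
    permHom K (Fin 8) genPsi (pairRatio K i) = pairRatio K (pairPsi i) + ![0, 0, 1, 1] i := by
  rw [pairRatio, map_div₀, permHom_genPsi_pairSum, permHom_Xvar]
  fin_cases i
  · simp [pairRatio, coe_genPsi, coe_pairPsi]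
  · simp [pairRatio, coe_genPsi, coe_pairPsi]
  · simpa [coe_genPsi, coe_pairPsi] using Xvar_natAdd_div_pairSum (K := K) 0
  · simpa [coe_genPsi, coe_pairPsi] using Xvar_natAdd_div_pairSum (K := K) 1

theorem adjoin_pairRatio_pairSum :
    adjoin K (Set.range (pairRatio K) ∪ Set.range (pairSum K)) = ⊤ := by
  set M := adjoin K (Set.range (pairRatio K) ∪ Set.range (pairSum K))
  have hV (i) : pairRatio K i ∈ M := subset_adjoin K _ (.inl ⟨i, rfl⟩)
  have hS (i) : pairSum K i ∈ M := subset_adjoin K _ (.inr ⟨i, rfl⟩)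
  have hX₁ (i : Fin 4) : Xvar K (Fin 8) (i.castAdd 4) ∈ M := by
    rw [← div_mul_cancel₀ (Xvar K (Fin 8) (i.castAdd 4)) (pairSum_ne_zero i)]
    exact mul_mem (hV i) (hS i)
  refine eq_top_of_Xvar_mem fun j ↦ ?_
  induction j using Fin.addCases (m := 4) (n := 4) with
  | left i => exact hX₁ i
  | right i => simpa [pairSum] using sub_mem (hS i) (hX₁ i)

theorem isRatExt_fixedSub_G12_of_charTwo [CharP K 2] : IsRatExt K (fixedSub K (Fin 8) G12) := by
  have : CharP (RFF K (Fin 8)) 2 := charP_of_injective_algebraMap' K 2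
  set V := pairRatio K
  have hgen : adjoin K (Set.range V ∪ Set.range (pairSum K)) = ⊤ := adjoin_pairRatio_pairSum
  have hu : AlgebraicIndependent K ![V 2, V 0, V 1, V 3] := by
    have : ![V 2, V 0, V 1, V 3] = V ∘ ![2, 0, 1, 3] := by ext i; fin_cases i <;> rfl
    exact this ▸ (algebraicIndependent_of_adjoin_pairSum hgen).comp _ (by decide)
  refine isRatExt_fixedSub_G12 (u := V) (c := evenInvariant (V 2) (V 0) (V 1) (V 3))
    (P := .X ^ 2 + .X) hgen ?_ ?_ ?_ ?_ ?_ ?_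
  · have : (.X ^ 2 + .X : Polynomial K).natDegree = 2 := by compute_degree!
    simp [this]
  · simp [V, permHom_genPhi_pairRatio]
  · intro i
    fin_cases i <;> simp [V, permHom_genPsi_pairRatio] <;> grind
  · intro i
    simp only [map_evenInvariant, V, permHom_genPhi_pairRatio]
    simp only [coe_pairPhi]
    exact congrFun (evenInvariant_rotate _ _ _ _) i
  · intro i
    simp only [map_evenInvariant, V, permHom_genPsi_pairRatio]
    simpa [coe_pairPsi] using congrFun (evenInvariant_translate _ _ _ _) i
  · intro L hL htop
    refine rank_le_of_evenInvariant_mem hu hL fun M hLM hw hx hy hz ↦ htop M hLM fun i ↦ ?_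
    fin_cases i
    exacts [hx, hy, hw, hz]

end EvenCharacteristic

/-- **Rationality for `G₁₂ ≃ SL(2,3)`.** For any field `K`, the subgroup `G₁₂ ⊆ S₈` generated by `Φ = (1,2,4)(5,6,8)` and `Ψ̃ = (1,3,5,7)(2,4,6,8)` (of order 24, isomorphic to `SL(2,3)`) has `K`-rational fixed field. -/
theorem rationality_G12 (K : Type) [Field K] :
    IsRatExt K ↥(fixedSub K (Fin 8) (Subgroup.closure
      {(Equiv.swap (0 : Fin 8) 1 * Equiv.swap 1 3) * (Equiv.swap (4 : Fin 8) 5 * Equiv.swap 5 7),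
       (Equiv.swap (0 : Fin 8) 2 * Equiv.swap 2 4 * Equiv.swap 4 6) * (Equiv.swap (1 : Fin 8) 3 * Equiv.swap 3 5 * Equiv.swap 5 7)})) := by
  by_cases h2 : (2 : K) = 0
  · have : CharP K 2 := CharTwo.of_one_ne_zero_of_two_eq_zero one_ne_zero h2
    exact isRatExt_fixedSub_G12_of_charTwo
  · exact isRatExt_fixedSub_G12_of_two_ne_zero h2
end
end

section
/- Let K be any field, and let G_24 ⊆ S_8 be the subgroup of order 48 generated by σ_1 = (1,2)(3,4)(5,6)(7,8), σ_2 = (1,3)(2,4)(5,7)(6,8), κ = (1,5)(2,6)(3,7)(4,8), φ_1 = (2,3,4)(7,6,5), and φ̃_2 = (3,4)(5,6). Then the fixed field K(x_1,…,x_8)^{G_24} is K-rational. -/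
noncomputable section

/-!
Arrange the variables into pairs `(xᵢ, yᵢ)`, let `aᵢ = xᵢ + yᵢ` and `Q = ∏ (X - aᵢ)`, and let `W` be
the Lagrange interpolation polynomial with `W(aᵢ) = yᵢ`. Permuting the pairs fixes both `Q` and `W`,
while exchanging the members of all pairs at once fixes `Q` and replaces `W` by `X - W`; conversely,
`Q` and the set `{W, X - W}` determine the pairs up to these operations. The invariants of
`W ↦ X - W` are generated by `w₁(1 - w₁)` and `w_j / (2w₁ - 1)` for `j ≠ 1`, so the field in `2n`
variables is Galois over the field generated by these and the coefficients of `Q`, and its Galois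
group consists of exactly these operations. As there are `2n` generators, they are algebraically
independent. The group `G₂₄` is `S₄ × S₂` acting in this way on the four pairs `{i, 9 - i}`.
-/

namespace G24
open Polynomial Lagrange IntermediateField

section FieldTheory
variable {K L : Type*} [Field K] [Field L] [Algebra K L]

theorem fixedField_fixingSubgroup_of_isGalois (F : IntermediateField K L) [IsGalois F L] :
    fixedField F.fixingSubgroup = F := by
  refine le_antisymm (fun z hz ↦ ?_) ((le_iff_le _ _).mpr le_rfl)
  have hbot : z ∈ (⊥ : IntermediateField F L) :=
    (InfiniteGalois.mem_bot_iff_fixed z).mpr fun f ↦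
      (mem_fixedField_iff _ _).mp hz _ ((fixingSubgroupEquiv F).symm f).2
  obtain ⟨u, rfl⟩ := mem_bot.mp hbot
  exact u.2

theorem isGalois_of_adjoin_eq_top {S : Set L} (hS : adjoin K S = ⊤)
    (h : ∀ s ∈ S, ∃ q ∈ lifts (algebraMap K L), q.Separable ∧ q.Splits ∧ q.IsRoot s) :
    IsGalois K L := by
  have hmin : ∀ s ∈ S, IsSeparable K s ∧ ((minpoly K s).map (algebraMap K L)).Splits := by
    intro s hs
    obtain ⟨_, ⟨q, rfl⟩, hsep, hsplit, hroot⟩ := h s hs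
    have hdvd : minpoly K s ∣ q :=
      minpoly.dvd K s (by rwa [aeval_def, ← eval_map])
    exact ⟨(separable_map _).mp hsep |>.of_dvd hdvd,
      hsplit.of_dvd hsep.ne_zero (Polynomial.map_dvd _ hdvd)⟩
  have hsep : Algebra.IsSeparable K L := by
    rw [← isSeparable_top, ← hS, isSeparable_adjoin_iff_isSeparable]
    exact fun s hs ↦ (hmin s hs).1
  have hnormal : Normal K L := normal_iff.mpr fun z ↦ ⟨Algebra.IsSeparable.isIntegral K z,
    splits_of_mem_adjoin K L (S := S) (fun s hs ↦ ⟨(hmin s hs).1.isIntegral, (hmin s hs).2⟩)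
      (hS ▸ mem_top)⟩
  exact ⟨⟩

theorem two_mul_ne_one_of_transcendental {w : L} (hw : Transcendental K w) : 2 * w ≠ 1 := by
  refine fun h ↦ hw ⟨C 2 * X - 1, fun h0 ↦ ?_, ?_⟩
  · simpa using congrArg (eval 0) h0
  · simp [show algebraMap K L 2 = 2 from map_ofNat _ 2, h]

theorem isRatExt_adjoin_range {K : Type} {L : Type*} [Field K] [Field L] [Algebra K L]
    {σ : Type*} [Finite σ] {t : σ → L} (ht : AlgebraicIndependent K t) :
    IsRatExt K (adjoin K (Set.range t)) := by
  let t' : σ → adjoin K (Set.range t) := fun s ↦ ⟨t s, subset_adjoin _ _ ⟨s, rfl⟩⟩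
  have ht' : AlgebraicIndependent K t' := .of_comp (adjoin K (Set.range t)).val ht
  obtain ⟨n, ⟨e⟩⟩ := Finite.exists_equiv_fin σ
  refine ⟨n, t' ∘ e.symm, ht'.comp _ e.symm.injective, lift_injective _ ?_⟩
  rw [Set.range_comp, Equiv.range_eq_univ, Set.image_univ, lift_adjoin, lift_top,
    ← Set.range_comp]
  rfl

theorem eval_mem_of_coeff_mem {M : IntermediateField K L} {q : L[X]} {z : L}
    (hq : ∀ j, q.coeff j ∈ M) (hz : z ∈ M) : q.eval z ∈ M := by
  rw [eval_eq_sum]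
  exact sum_mem fun j _ ↦ mul_mem (hq j) (pow_mem hz j)

theorem algebraicIndependent_of_card_le {ι σ : Type*} [Finite ι] [Finite σ] {x : ι → L}
    (hx : AlgebraicIndependent K x) (hgen : adjoin K (Set.range x) = ⊤) {t : σ → L}
    [Algebra.IsAlgebraic (adjoin K (Set.range t)) L] (hcard : Nat.card σ ≤ Nat.card ι) :
    AlgebraicIndependent K t := by
  have hbasis : IsTranscendenceBasis K x := by
    rw [hx.isTranscendenceBasis_iff_isAlgebraic, ← isAlgebraic_adjoin_iff_top, hgen]
    infer_instance
  have htrdeg : Algebra.trdeg K L = Nat.card ι := Cardinal.lift_injective <| by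
    rw [← hbasis.lift_cardinalMk_eq_trdeg, ← Nat.cast_card, Cardinal.lift_natCast,
      Cardinal.lift_natCast]
  have := isAlgebraic_adjoin_iff_top.mp ‹Algebra.IsAlgebraic (adjoin K (Set.range t)) L›
  refine (Algebra.IsAlgebraic.isTranscendenceBasis_of_lift_le_trdeg_of_finite K t ?_).1
  rw [htrdeg, ← Nat.cast_card, Cardinal.lift_natCast, Cardinal.lift_natCast]
  exact_mod_cast hcard

theorem coeff_mem_of_degree_lt {M : IntermediateField K L} {q : L[X]} {n : ℕ} (hq : q.degree < n)
    (h : ∀ j : Fin n, q.coeff j ∈ M) (j : ℕ) : q.coeff j ∈ M := by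
  rcases lt_or_ge j n with hj | hj
  · exact h ⟨j, hj⟩
  · rw [coeff_eq_zero_of_degree_lt (hq.trans_le (by exact_mod_cast hj))]
    exact zero_mem M

theorem coeff_mem_of_monic {M : IntermediateField K L} {q : L[X]} (hq : q.Monic)
    (h : ∀ j : Fin q.natDegree, q.coeff j ∈ M) (j : ℕ) : q.coeff j ∈ M := by
  rcases lt_trichotomy j q.natDegree with hj | rfl | hj
  · exact h ⟨j, hj⟩
  · rw [hq.coeff_natDegree]
    exact one_mem M
  · rw [coeff_eq_zero_of_natDegree_lt hj]
    exact zero_mem M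

end FieldTheory

section Interpolation
variable {L ι : Type*} [Field L] [Fintype ι] {a : ι → L} {f : L →+* L}

theorem map_nodal_eq_of_perm (p : Equiv.Perm ι) (hp : ∀ i, f (a i) = a (p i)) :
    (nodal Finset.univ a).map f = nodal Finset.univ a := by
  simp only [nodal, Polynomial.map_prod, Polynomial.map_sub, map_X, map_C, hp]
  exact Equiv.prod_comp p fun i ↦ X - C (a i)

theorem exists_perm_of_map_nodal_eq (ha : Function.Injective a)
    (h : (nodal Finset.univ a).map f = nodal Finset.univ a) :
    ∃ p : Equiv.Perm ι, ∀ i, f (a i) = a (p i) := by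
  have hex : ∀ i, ∃ j, f (a i) = a j := fun i ↦ by
    have h0 : (nodal Finset.univ a).eval (f (a i)) = 0 := by
      rw [← h, eval_map_apply, eval_nodal_at_node (Finset.mem_univ i), map_zero]
    simpa [eval_nodal, Finset.prod_eq_zero_iff, sub_eq_zero] using h0
  choose p hp using hex
  have hinj : Function.Injective p := fun i j hij ↦
    ha (f.injective (by rw [hp, hp, hij]))
  exact ⟨.ofBijective p (Finite.injective_iff_bijective.mp hinj), hp⟩

theorem map_interpolate_eq_iff [DecidableEq ι] (ha : Function.Injective a) {y : ι → L}
    {q : L[X]} (hq : q.degree < Fintype.card ι) {p : Equiv.Perm ι} (hp : ∀ i, f (a i) = a (p i)) :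
    (interpolate Finset.univ a y).map f = q ↔ ∀ i, f (y i) = q.eval (a (p i)) := by
  have heval : ∀ i, ((interpolate Finset.univ a y).map f).eval (a (p i)) = f (y i) := fun i ↦ by
    rw [← hp, eval_map_apply, eval_interpolate_at_node y ha.injOn (Finset.mem_univ i)]
  refine ⟨fun h i ↦ by rw [← heval, h], fun h ↦ ?_⟩
  refine eq_of_degrees_lt_of_eval_index_eq Finset.univ ha.injOn ?_ hq fun i _ ↦ ?_
  · exact degree_map_le.trans_lt (degree_interpolate_lt y ha.injOn)
  · rw [← p.apply_symm_apply i, heval, h]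

end Interpolation

section Flip
variable {L : Type*} [Field L]

/-- The generators `w₁(1 - w₁)` (for `j = 1`) and `w_j / (2w₁ - 1)` (for `j ≠ 1`) of the rational
functions in the coefficients `w_j` of `W` that are invariant under the involution `W ↦ X - W`.
Division makes them uninformative when `2w₁ = 1`. -/
def flipInvariant (W : L[X]) (j : ℕ) : L :=
  if j = 1 then W.coeff 1 * (1 - W.coeff 1) else W.coeff j / (2 * W.coeff 1 - 1)

theorem flipInvariant_map (W : L[X]) (f : L →+* L) (j : ℕ) :
    flipInvariant (W.map f) j = f (flipInvariant W j) := by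
  simp only [flipInvariant, coeff_map, apply_ite f, map_mul, map_sub, map_one, map_div₀, map_ofNat]

theorem coeff_eq_flipInvariant_mul {W : L[X]} (hW : 2 * W.coeff 1 ≠ 1) {j : ℕ} (hj : j ≠ 1) :
    W.coeff j = flipInvariant W j * (2 * W.coeff 1 - 1) := by
  rw [flipInvariant, if_neg hj, div_mul_cancel₀ _ (sub_ne_zero.mpr hW)]

theorem flipInvariant_X_sub (W : L[X]) (j : ℕ) :
    flipInvariant (X - W) j = flipInvariant W j := by
  by_cases hj : j = 1
  · simp only [flipInvariant, if_pos hj, coeff_sub, coeff_X_one]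
    ring
  · simp only [flipInvariant, if_neg hj, coeff_sub, coeff_X_one, coeff_X_of_ne_one hj]
    rw [show 2 * (1 - W.coeff 1) - 1 = -(2 * W.coeff 1 - 1) by ring, zero_sub, neg_div_neg_eq]

theorem flipInvariant_eq_iff {V W : L[X]} (hW : 2 * W.coeff 1 ≠ 1) :
    (∀ j, flipInvariant V j = flipInvariant W j) ↔ V = W ∨ V = X - W := by
  refine ⟨fun h ↦ ?_, ?_⟩
  · have hcoeff_one : V.coeff 1 = W.coeff 1 ∨ V.coeff 1 = 1 - W.coeff 1 := by
      have h1 : V.coeff 1 * (1 - V.coeff 1) = W.coeff 1 * (1 - W.coeff 1) := h 1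
      rw [← sub_eq_zero, ← sub_eq_zero (a := V.coeff 1) (b := 1 - W.coeff 1), ← mul_eq_zero]
      linear_combination -h1
    have hV : 2 * V.coeff 1 ≠ 1 := fun hV ↦ hW (by
      rcases hcoeff_one with h1 | h1
      · rwa [← h1]
      · linear_combination 2 * h1 - hV)
    refine hcoeff_one.imp (fun h1 ↦ ?_) (fun h1 ↦ ?_) <;> ext j <;> by_cases hj : j = 1
    · rw [hj, h1]
    · rw [coeff_eq_flipInvariant_mul hV hj, h, h1, coeff_eq_flipInvariant_mul hW hj]
    · rw [hj, h1, coeff_sub, coeff_X_one]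
    · rw [coeff_eq_flipInvariant_mul hV hj, h, h1, coeff_sub, coeff_X_of_ne_one hj,
        coeff_eq_flipInvariant_mul hW hj]
      ring
  · rintro (rfl | rfl) j
    exacts [rfl, flipInvariant_X_sub W j]

end Flip

section Pairs
variable {K L ι : Type*} [Field K] [Field L] [Algebra K L] {x : ι × Bool → L}

/-- The sum of the two members of the `i`-th pair of a family of pairs. -/
def pairSum (x : ι × Bool → L) (i : ι) : L :=
  x (i, false) + x (i, true)

theorem pairSum_injective (hx : AlgebraicIndependent K x) : Function.Injective (pairSum x) := by
  classical
  intro i j hij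
  have hpoly : (MvPolynomial.X (i, false) + MvPolynomial.X (i, true) : MvPolynomial (ι × Bool) K) =
      MvPolynomial.X (j, false) + MvPolynomial.X (j, true) :=
    hx (by simpa [pairSum] using hij)
  by_contra hne
  simpa [Ne.symm hne] using congrArg (MvPolynomial.eval (Pi.single (i, false) 1)) hpoly

variable [Fintype ι]

/-- The monic polynomial whose roots are the pair sums. -/
def pairSumPoly (x : ι × Bool → L) : L[X] :=
  nodal Finset.univ (pairSum x)

theorem natDegree_pairSumPoly (x : ι × Bool → L) :
    (pairSumPoly x).natDegree = Fintype.card ι := by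
  rw [pairSumPoly, natDegree_nodal, Finset.card_univ]

theorem isRoot_pairSumPoly (x : ι × Bool → L) (i : ι) : (pairSumPoly x).IsRoot (pairSum x i) :=
  eval_nodal_at_node (Finset.mem_univ i)

variable [DecidableEq ι]

/-- The Lagrange interpolation polynomial that recovers the second member of each pair from the
pair sum. -/
def partnerPoly (x : ι × Bool → L) : L[X] :=
  interpolate Finset.univ (pairSum x) fun i ↦ x (i, true)

theorem degree_partnerPoly_lt (hx : Function.Injective (pairSum x)) :
    (partnerPoly x).degree < Fintype.card ι :=
  degree_interpolate_lt _ hx.injOn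

theorem eval_partnerPoly (hx : Function.Injective (pairSum x)) (i : ι) :
    (partnerPoly x).eval (pairSum x i) = x (i, true) :=
  eval_interpolate_at_node _ hx.injOn (Finset.mem_univ i)

theorem exists_perm_iff_map_eq [Nontrivial ι] (hx : Function.Injective (pairSum x)) (f : L →+* L) :
    (∃ (p : Equiv.Perm ι) (s : Equiv.Perm Bool), ∀ i b, f (x (i, b)) = x (p i, s b)) ↔
      (pairSumPoly x).map f = pairSumPoly x ∧
        ((partnerPoly x).map f = partnerPoly x ∨ (partnerPoly x).map f = X - partnerPoly x) := by
  have hdeg := degree_partnerPoly_lt hx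
  have hdeg' : (X - partnerPoly x).degree < (Fintype.card ι : WithBot ℕ) :=
    (degree_sub_le _ _).trans_lt <| max_lt
      (degree_X_le.trans_lt (by exact_mod_cast Fintype.one_lt_card)) hdeg
  have hmap_iff {p : Equiv.Perm ι} (hp : ∀ i, f (pairSum x i) = pairSum x (p i)) :
      ((partnerPoly x).map f = partnerPoly x ↔ ∀ i, f (x (i, true)) = x (p i, true)) ∧
      ((partnerPoly x).map f = X - partnerPoly x ↔ ∀ i, f (x (i, true)) = x (p i, false)) := by
    refine ⟨(map_interpolate_eq_iff hx hdeg hp).trans ?_,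
      (map_interpolate_eq_iff hx hdeg' hp).trans ?_⟩
    · simp only [eval_partnerPoly hx]
    · simp only [eval_sub, eval_X, eval_partnerPoly hx]
      simp only [pairSum, add_sub_cancel_right]
  constructor
  · rintro ⟨p, s, hps⟩
    have hs : s = 1 ∨ s = Equiv.swap false true := by clear hps; decide +revert
    have hp : ∀ i, f (pairSum x i) = pairSum x (p i) := fun i ↦ by
      rcases hs with rfl | rfl <;> simp [pairSum, hps, add_comm]
    refine ⟨map_nodal_eq_of_perm p hp, ?_⟩
    rw [(hmap_iff hp).1, (hmap_iff hp).2]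
    rcases hs with rfl | rfl <;> simp [hps]
  · rintro ⟨hQ, hW⟩
    obtain ⟨p, hp⟩ := exists_perm_of_map_nodal_eq hx hQ
    have hfalse : ∀ i, f (x (i, false)) = x (p i, false) + x (p i, true) - f (x (i, true)) :=
      fun i ↦ by rw [eq_sub_iff_add_eq, ← map_add]; exact hp i
    rw [(hmap_iff hp).1, (hmap_iff hp).2] at hW
    rcases hW with hW | hW
    · exact ⟨p, 1, fun i b ↦ by cases b <;> simp [hfalse, hW]⟩
    · exact ⟨p, Equiv.swap false true, fun i b ↦ by cases b <;> simp [hfalse, hW]⟩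

theorem eq_top_of_pairSum_mem (hinj : Function.Injective (pairSum x))
    (hgen : adjoin K (Set.range x) = ⊤) {M : IntermediateField K L}
    (hsum : ∀ i, pairSum x i ∈ M) (hpartner : ∀ j, (partnerPoly x).coeff j ∈ M) : M = ⊤ := by
  have htrue : ∀ i, x (i, true) ∈ M := fun i ↦ by
    rw [← eval_partnerPoly hinj]
    exact eval_mem_of_coeff_mem hpartner (hsum i)
  rw [← top_le_iff, ← hgen, adjoin_le_iff]
  rintro _ ⟨⟨i, b⟩, rfl⟩
  cases b
  · simpa [pairSum] using sub_mem (hsum i) (htrue i)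
  · exact htrue i

theorem isAlgebraic_of_coeff_mem (hinj : Function.Injective (pairSum x))
    (hgen : adjoin K (Set.range x) = ⊤) {F : IntermediateField K L}
    (hsum : ∀ j, (pairSumPoly x).coeff j ∈ F) (hpartner : ∀ j, (partnerPoly x).coeff j ∈ F) :
    Algebra.IsAlgebraic F L := by
  have hlifts : pairSumPoly x ∈ lifts (algebraMap F L) :=
    (lifts_iff_coeff_lifts _).mpr fun j ↦ ⟨⟨_, hsum j⟩, rfl⟩
  obtain ⟨q, hq : q.map (algebraMap F L) = pairSumPoly x⟩ := hlifts
  have hq0 : q ≠ 0 := by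
    rintro rfl
    exact nodal_ne_zero (hq.symm.trans (Polynomial.map_zero _))
  have htop : (algebraicClosure F L).restrictScalars K = ⊤ :=
    eq_top_of_pairSum_mem hinj hgen
      (fun i ↦ mem_algebraicClosure_iff.mpr ⟨q, hq0, by
        rw [aeval_def, ← eval_map, hq]
        exact isRoot_pairSumPoly x i⟩)
      (fun j ↦ (algebraicClosure F L).algebraMap_mem ⟨_, hpartner j⟩)
  exact (algebraicClosure.eq_top_iff F L).mp (restrictScalars_eq_top_iff.mp htop)

theorem transcendental_coeff_one_partnerPoly [Nontrivial ι] (hx : AlgebraicIndependent K x)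
    (hgen : adjoin K (Set.range x) = ⊤) : Transcendental K ((partnerPoly x).coeff 1) := by
  have hinj := pairSum_injective hx
  let t : Fin (pairSumPoly x).natDegree ⊕ Fin (Fintype.card ι) → L :=
    Sum.elim (fun j ↦ (pairSumPoly x).coeff j) (fun j ↦ (partnerPoly x).coeff j)
  have ht : ∀ s, t s ∈ adjoin K (Set.range t) := fun s ↦ subset_adjoin _ _ ⟨s, rfl⟩
  have : Algebra.IsAlgebraic (adjoin K (Set.range t)) L :=
    isAlgebraic_of_coeff_mem hinj hgen
      (coeff_mem_of_monic nodal_monic fun j ↦ ht (.inl j))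
      (coeff_mem_of_degree_lt (degree_partnerPoly_lt hinj) fun j ↦ ht (.inr j))
  have hindep : AlgebraicIndependent K t := algebraicIndependent_of_card_le hx hgen <| by
    simp [natDegree_pairSumPoly, mul_two]
  exact hindep.transcendental (.inr ⟨1, Fintype.one_lt_card⟩)

/-- The generators of the field of invariants of the permutations and the simultaneous flip of the
pairs. -/
def pairInvariant (x : ι × Bool → L) : Fin (pairSumPoly x).natDegree ⊕ Fin (Fintype.card ι) → L :=
  Sum.elim (fun j ↦ (pairSumPoly x).coeff j) (fun j ↦ flipInvariant (partnerPoly x) j)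

theorem coeff_pairSumPoly_mem (x : ι × Bool → L) (j : ℕ) :
    (pairSumPoly x).coeff j ∈ adjoin K (Set.range (pairInvariant x)) :=
  coeff_mem_of_monic nodal_monic (fun i ↦
    subset_adjoin K (Set.range (pairInvariant x)) ⟨.inl i, rfl⟩) j

theorem flipInvariant_partnerPoly_mem [Nontrivial ι] (hinj : Function.Injective (pairSum x))
    (j : ℕ) :
    flipInvariant (partnerPoly x) j ∈ adjoin K (Set.range (pairInvariant x)) := by
  rcases lt_or_ge j (Fintype.card ι) with hj | hj
  · exact subset_adjoin _ _ ⟨.inr ⟨j, hj⟩, rfl⟩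
  · have hj1 : j ≠ 1 := (Fintype.one_lt_card.trans_le hj).ne'
    have hcoeff : (partnerPoly x).coeff j = 0 :=
      coeff_eq_zero_of_degree_lt ((degree_partnerPoly_lt hinj).trans_le (by exact_mod_cast hj))
    rw [flipInvariant, if_neg hj1, hcoeff, zero_div]
    exact zero_mem _

theorem isGalois_adjoin_pairInvariant [Nontrivial ι] (hinj : Function.Injective (pairSum x))
    (hgen : adjoin K (Set.range x) = ⊤) (hne : 2 * (partnerPoly x).coeff 1 ≠ 1) :
    IsGalois (adjoin K (Set.range (pairInvariant x))) L := by
  set F := adjoin K (Set.range (pairInvariant x))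
  set w := (partnerPoly x).coeff 1
  let S : Set L := insert w (Set.range (pairSum x))
  have hwS : w ∈ adjoin F S := subset_adjoin _ _ (Set.mem_insert _ _)
  have htop : (adjoin F S).restrictScalars K = ⊤ := by
    refine eq_top_of_pairSum_mem hinj hgen
      (fun i ↦ subset_adjoin F S (Set.mem_insert_of_mem _ ⟨i, rfl⟩)) fun j ↦ ?_
    rw [mem_restrictScalars]
    by_cases hj : j = 1
    · rwa [hj]
    · rw [coeff_eq_flipInvariant_mul hne hj]
      exact mul_mem ((adjoin F S).algebraMap_mem ⟨_, flipInvariant_partnerPoly_mem hinj j⟩)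
        (sub_mem (mul_mem (ofNat_mem _ 2) hwS) (one_mem _))
  refine isGalois_of_adjoin_eq_top (restrictScalars_eq_top_iff.mp htop) ?_
  rintro _ (rfl | ⟨i, rfl⟩)
  · refine ⟨(X - C w) * (X - C (1 - w)), ?_, ?_, (Splits.X_sub_C _).mul (Splits.X_sub_C _), ?_⟩
    · refine ⟨X ^ 2 - X + C ⟨w * (1 - w), flipInvariant_partnerPoly_mem hinj 1⟩, ?_⟩
      simp only [coe_mapRingHom, Polynomial.map_add, Polynomial.map_sub, Polynomial.map_pow, map_X,
        map_C, IntermediateField.algebraMap_apply, C_mul, C_sub, C_1]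
      ring
    · refine separable_X_sub_C.mul separable_X_sub_C (isCoprime_X_sub_C_of_isUnit_sub ?_)
      exact (sub_ne_zero.mpr fun h ↦ hne (by linear_combination h)).isUnit
    · simp
  · refine ⟨pairSumPoly x, ?_, ?_, ?_, isRoot_pairSumPoly x i⟩
    · exact (lifts_iff_coeff_lifts _).mpr fun j ↦ ⟨⟨_, coeff_pairSumPoly_mem x j⟩, rfl⟩
    · exact separable_prod_X_sub_C_iff.mpr hinj
    · exact Splits.prod fun i _ ↦ Splits.X_sub_C _

theorem mem_fixingSubgroup_adjoin_pairInvariant_iff [Nontrivial ι]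
    (hinj : Function.Injective (pairSum x)) (hne : 2 * (partnerPoly x).coeff 1 ≠ 1)
    {f : L ≃ₐ[K] L} :
    f ∈ (adjoin K (Set.range (pairInvariant x))).fixingSubgroup ↔
      ∃ (p : Equiv.Perm ι) (s : Equiv.Perm Bool), ∀ i b, f (x (i, b)) = x (p i, s b) := by
  rw [IntermediateField.mem_fixingSubgroup_iff]
  refine Iff.trans ?_ (exists_perm_iff_map_eq hinj (f : L →+* L)).symm
  rw [← flipInvariant_eq_iff hne]
  constructor
  · intro h
    refine ⟨Polynomial.ext fun j ↦ ?_, fun j ↦ ?_⟩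
    · rw [coeff_map]
      exact h _ (coeff_pairSumPoly_mem x j)
    · rw [flipInvariant_map]
      exact h _ (flipInvariant_partnerPoly_mem hinj j)
  · rintro ⟨hQ, hW⟩
    refine (forall_mem_adjoin_smul_eq_self_iff K f).mpr ?_
    rintro _ ⟨j | j, rfl⟩
    · exact (coeff_map _ _).symm.trans (congrArg (coeff · j) hQ)
    · exact (flipInvariant_map _ _ _).symm.trans (hW j)

end Pairs

theorem isRatExt_fixedField {K : Type} {L ι : Type*} [Field K] [Field L] [Algebra K L]
    [Finite ι] [Nontrivial ι] {x : ι × Bool → L} (hx : AlgebraicIndependent K x)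
    (hgen : adjoin K (Set.range x) = ⊤) {H : Subgroup (L ≃ₐ[K] L)}
    (hH : ∀ f, f ∈ H ↔
      ∃ (p : Equiv.Perm ι) (s : Equiv.Perm Bool), ∀ i b, f (x (i, b)) = x (p i, s b)) :
    IsRatExt K (fixedField H) := by
  classical
  have := Fintype.ofFinite ι
  have hinj := pairSum_injective hx
  have hne := two_mul_ne_one_of_transcendental (transcendental_coeff_one_partnerPoly hx hgen)
  have hgalois := isGalois_adjoin_pairInvariant hinj hgen hne
  have hfix : H = (adjoin K (Set.range (pairInvariant x))).fixingSubgroup := by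
    ext f
    rw [hH, mem_fixingSubgroup_adjoin_pairInvariant_iff hinj hne]
  have hindep : AlgebraicIndependent K (pairInvariant x) :=
    algebraicIndependent_of_card_le hx hgen (by simp [natDegree_pairSumPoly, mul_two])
  rw [hfix, fixedField_fixingSubgroup_of_isGalois]
  exact isRatExt_adjoin_range hindep

section RationalFunctionField
variable {K I : Type} [Field K]

theorem permHom_Xvar (g : Equiv.Perm I) (k : I) :
    permHom K I g (Xvar K I k) = Xvar K I (g k) := by
  simp [permHom, Xvar, renameHom]

theorem algebraicIndependent_Xvar : AlgebraicIndependent K (Xvar K I) :=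
  (MvPolynomial.algebraicIndependent_X I K).map'
    (f := IsScalarTower.toAlgHom K (MvPolynomial I K) (RFF K I)) (IsFractionRing.injective _ _)

theorem adjoin_range_Xvar : adjoin K (Set.range (Xvar K I)) = ⊤ := by
  have hrange : (IsScalarTower.toAlgHom K (MvPolynomial I K) (RFF K I)).range =
      Algebra.adjoin K (Set.range (Xvar K I)) := by
    rw [← Algebra.map_top, ← MvPolynomial.adjoin_range_X, AlgHom.map_adjoin, ← Set.range_comp]
    rfl
  rw [← IsFractionRing.algHom_fieldRange_eq_of_comp_eq_of_range_eq
    (f := AlgHom.id K (RFF K I)) rfl hrange]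
  exact AlgHom.fieldRange_eq_top.mpr Function.surjective_id

theorem algEquiv_ext_Xvar {f g : RFF K I ≃ₐ[K] RFF K I}
    (h : ∀ k, f (Xvar K I k) = g (Xvar K I k)) : f = g :=
  AlgEquiv.coe_toAlgHom_injective <|
    IsLocalization.algHom_ext (nonZeroDivisors (MvPolynomial I K)) <| MvPolynomial.algHom_ext h

end RationalFunctionField

section ProductAction
variable {α β γ : Type*}

/-- The product action of `Perm α × Perm β` on `α × β`, transported along `e : α × β ≃ γ`. -/
def prodPermHom (e : α × β ≃ γ) : Equiv.Perm α × Equiv.Perm β →* Equiv.Perm γ :=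
  e.permCongrHom.toMonoidHom.comp
    { toFun g := g.1.prodCongr g.2
      map_one' := rfl
      map_mul' _ _ := rfl }

theorem prodPermHom_apply (e : α × β ≃ γ) (g : Equiv.Perm α × Equiv.Perm β) (a : α) (b : β) :
    prodPermHom e g (e (a, b)) = e (g.1 a, g.2 b) := by
  change e (g.1.prodCongr g.2 (e.symm (e (a, b)))) = _
  rw [e.symm_apply_apply]
  rfl

theorem mem_map_permHom_range_prodPermHom_iff {K I : Type} [Field K]
    (e : α × β ≃ I) {f : RFF K I ≃ₐ[K] RFF K I} :
    f ∈ (prodPermHom e).range.map (permHom K I) ↔ ∃ (p : Equiv.Perm α) (s : Equiv.Perm β),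
      ∀ a b, f (Xvar K I (e (a, b))) = Xvar K I (e (p a, s b)) := by
  constructor
  · rintro ⟨_, ⟨g, rfl⟩, rfl⟩
    exact ⟨g.1, g.2, fun a b ↦ by rw [permHom_Xvar, prodPermHom_apply]⟩
  · rintro ⟨p, s, hf⟩
    refine ⟨prodPermHom e (p, s), ⟨_, rfl⟩, algEquiv_ext_Xvar fun k ↦ ?_⟩
    obtain ⟨⟨a, b⟩, rfl⟩ := e.surjective k
    rw [permHom_Xvar, prodPermHom_apply, hf]

end ProductAction

section Group

/-- The generators `σ₁`, `σ₂`, `κ`, `φ₁` and `φ̃₂` of `G₂₄`, as permutations of `0, …, 7`. -/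
def generators : Set (Equiv.Perm (Fin 8)) :=
  {Equiv.swap 0 1 * Equiv.swap 2 3 * Equiv.swap 4 5 * Equiv.swap 6 7,
   Equiv.swap 0 2 * Equiv.swap 1 3 * Equiv.swap 4 6 * Equiv.swap 5 7,
   Equiv.swap 0 4 * Equiv.swap 1 5 * Equiv.swap 2 6 * Equiv.swap 3 7,
   (Equiv.swap 1 2 * Equiv.swap 2 3) * (Equiv.swap 6 5 * Equiv.swap 5 4),
   Equiv.swap 2 3 * Equiv.swap 4 5}

/-- The indices `0, …, 7` arranged into the four pairs `{i, 7 - i}`, which are the blocks of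
imprimitivity exhibiting `G₂₄` as `S₄ × S₂`. -/
def pairing : Fin 4 × Bool ≃ Fin 8 where
  toFun a := bif a.2 then (Fin.castAdd 4 a.1).rev else Fin.castAdd 4 a.1
  invFun := ![(0, false), (1, false), (2, false), (3, false),
    (3, true), (2, true), (1, true), (0, true)]
  left_inv := by decide
  right_inv := by decide

theorem generators_subset_range : generators ⊆ (prodPermHom pairing).range := by
  rintro _ (rfl | rfl | rfl | rfl | rfl)
  · exact ⟨(Equiv.swap 0 1 * Equiv.swap 2 3, 1), by decide⟩
  · exact ⟨(Equiv.swap 0 2 * Equiv.swap 1 3, 1), by decide⟩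
  · exact ⟨(Equiv.swap 0 3 * Equiv.swap 1 2, Equiv.swap false true), by decide⟩
  · exact ⟨(Equiv.swap 1 2 * Equiv.swap 2 3, 1), by decide⟩
  · exact ⟨(Equiv.swap 2 3, 1), by decide⟩

theorem prodPermHom_adjacent_swap_mem (i : Fin 3) :
    prodPermHom pairing (Equiv.swap i.castSucc i.succ, 1) ∈ Subgroup.closure generators := by
  have hσ₁ := Subgroup.subset_closure (k := generators) (.inl rfl)
  have hφ₁ := Subgroup.subset_closure (k := generators) (.inr (.inr (.inr (.inl rfl))))
  have hφ₂ : Equiv.swap 2 3 * Equiv.swap 4 5 ∈ Subgroup.closure generators :=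
    Subgroup.subset_closure (.inr (.inr (.inr (.inr rfl))))
  fin_cases i
  · convert mul_mem hσ₁ hφ₂ using 1
    decide
  · convert mul_mem hφ₁ hφ₂ using 1
    decide
  · convert hφ₂ using 1
    decide

theorem prodPermHom_flip_mem :
    prodPermHom pairing (1, Equiv.swap false true) ∈ Subgroup.closure generators := by
  have hσ₁ := Subgroup.subset_closure (k := generators) (.inl rfl)
  have hσ₂ := Subgroup.subset_closure (k := generators) (.inr (.inl rfl))
  have hκ := Subgroup.subset_closure (k := generators) (.inr (.inr (.inl rfl)))
  convert mul_mem (mul_mem hσ₁ hσ₂) hκ using 1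
  decide

theorem closure_generators : Subgroup.closure generators = (prodPermHom pairing).range := by
  refine le_antisymm ((Subgroup.closure_le _).mpr generators_subset_range) ?_
  rintro _ ⟨⟨p, s⟩, rfl⟩
  let H := (Subgroup.closure generators).comap (prodPermHom pairing)
  have hp : (p, 1) ∈ H := by
    have hle : Submonoid.closure (Set.range fun i : Fin 3 ↦ Equiv.swap i.castSucc i.succ) ≤
        (H.comap (MonoidHom.inl _ _)).toSubmonoid :=
      (Submonoid.closure_le).mpr (Set.range_subset_iff.mpr prodPermHom_adjacent_swap_mem)
    rw [Equiv.Perm.mclosure_swap_castSucc_succ] at hle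
    exact hle (Submonoid.mem_top p)
  have hs : (1, s) ∈ H := by
    have hs : s = 1 ∨ s = Equiv.swap false true := by decide +revert
    rcases hs with rfl | rfl
    · exact one_mem H
    · exact prodPermHom_flip_mem
  have hps : (p, s) ∈ H := by simpa using mul_mem hp hs
  exact hps

end Group

end G24

theorem rationality_G24_general (K : Type) [Field K] {ι : Type*} {I : Type} [Finite ι]
    [Nontrivial ι] (e : ι × Bool ≃ I) : IsRatExt K (fixedSub K I (G24.prodPermHom e).range) := by
  refine G24.isRatExt_fixedField (x := Xvar K I ∘ e)
    (G24.algebraicIndependent_Xvar.comp e e.injective) ?_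
    fun f ↦ G24.mem_map_permHom_range_prodPermHom_iff e
  rw [e.surjective.range_comp, G24.adjoin_range_Xvar]

/-- **Rationality for `G₂₄`.** For any field `K`, the subgroup `G₂₄ ⊆ S₈` of order 48 generated by `σ₁`, `σ₂`, `κ`, `φ₁ = (2,3,4)(7,6,5)` and `φ̃₂ = (3,4)(5,6)` has `K`-rational fixed field. -/
theorem rationality_G24 (K : Type) [Field K] :
    IsRatExt K ↥(fixedSub K (Fin 8) (Subgroup.closure
      {Equiv.swap (0 : Fin 8) 1 * Equiv.swap 2 3 * Equiv.swap 4 5 * Equiv.swap 6 7,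
       Equiv.swap (0 : Fin 8) 2 * Equiv.swap 1 3 * Equiv.swap 4 6 * Equiv.swap 5 7,
       Equiv.swap (0 : Fin 8) 4 * Equiv.swap 1 5 * Equiv.swap 2 6 * Equiv.swap 3 7,
       (Equiv.swap (1 : Fin 8) 2 * Equiv.swap 2 3) * (Equiv.swap (6 : Fin 8) 5 * Equiv.swap 5 4),
       Equiv.swap (2 : Fin 8) 3 * Equiv.swap 4 5})) := by
  have h : IsRatExt K (fixedSub K (Fin 8) (Subgroup.closure G24.generators)) := by
    rw [G24.closure_generators]
    exact rationality_G24_general K G24.pairing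
  exact h
end
end
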